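/- arXiv:2404.16643 — 2 statements merged into one kernel-verified Lean document; each statement's English description precedes it below -/
import Mathlib

section
/- Let L be a finite lattice with minimum 0̂ and maximum 1̂, 0̂ ≠ 1̂, and let i₁, i₂ ≥ 1 and 0 ≤ k ≤ min{i₁, i₂} be integers. If 1̂ is an (i₁+i₂−k−1)-synor, then there exist an (i₁−1)-synor x and an (i₂−1)-synor y with x ∨ y = 1̂. -/
open Finsupp

noncomputable section

variable (K : Type) [Field K]

section Core
variable (P : Type) [Preorder P]

/-- Order chains with `n` elements of the poset `P`, written as strictly
decreasing tuples `(x₀ > x₁ > ⋯ > x_{n-1})`. -/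
def OChain (n : ℕ) : Type := {c : Fin n → P // StrictAnti c}

/-- The chain group in "level" `n`: the `K`-vector space with basis the order chains with
`n` elements.  Level `n` corresponds to homological degree `n - 1`; in particular
`CGrp K P 0 ≅ K` is the reduced part `C̃₋₁`. -/
abbrev CGrp (n : ℕ) : Type := OChain P n →₀ K

/-- Deletion of the `k`-th entry of an order chain. -/
def odel {n : ℕ} (k : Fin (n + 1)) (c : OChain P (n + 1)) : OChain P n :=
  ⟨c.1 ∘ k.succAbove, c.2.comp_strictMono (Fin.strictMono_succAbove k)⟩

/-- The simplicial boundary map (of the reduced simplicial chain complex of the order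
complex), from level `n+1` to level `n`. -/
def cbdry (n : ℕ) : CGrp K P (n + 1) →ₗ[K] CGrp K P n :=
  Finsupp.lsum K fun c => ∑ k : Fin (n + 1), ((-1 : K) ^ (k : ℕ)) • Finsupp.lsingle (odel P k c)

/-- The cycles in level `n` (every level-0 chain, i.e. multiple of the empty chain,
is a cycle). -/
def cyclesAt : (n : ℕ) → Submodule K (CGrp K P n)
  | 0 => ⊤
  | (n + 1) => LinearMap.ker (cbdry K P n)

/-- The boundaries in level `n`. -/
def boundariesIn (n : ℕ) : Submodule K (CGrp K P n) :=
  LinearMap.range (cbdry K P n)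

/-- `H̃_{n-1}(P) ≠ 0`: nontriviality of the reduced simplicial homology (with coefficients
in `K`) of the order complex of `P` in degree `n - 1` (level `n`). -/
def RHomNontrivial (n : ℕ) : Prop := ¬ cyclesAt K P n ≤ boundariesIn K P n

end Core


/-- `x` is an `i`-synor of the finite lattice `L` (with minimum `0̂ = ⊥`):
`x ∈ L ∖ {0̂}` and the open interval `(0̂, x)` has nontrivial reduced homology
`H̃_{i-1}` (degree `i - 1`, i.e. level `i`). -/
def IsSynor (L : Type) [Lattice L] [OrderBot L] (i : ℕ) (x : L) : Prop :=
  x ≠ ⊥ ∧ RHomNontrivial K ↥(Set.Ioo (⊥ : L) x) i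

open scoped TensorProduct

section Resolution

variable {K}

/-- A linear map sends `supported K K S` into `Q` as soon as it does so on the basis. -/
lemma map_mem_of_supported {α M : Type} [AddCommMonoid M] [Module K M] {S : Set α}
    {Q : Submodule K M} (f : (α →₀ K) →ₗ[K] M) (hf : ∀ i ∈ S, f (single i 1) ∈ Q)
    {x : α →₀ K} (hx : x ∈ supported K K S) : f x ∈ Q := by
  rw [supported_eq_span_single] at hx
  have : Submodule.span K ((fun i => single i (1 : K)) '' S) ≤ Q.comap f := by
    rw [Submodule.span_le]
    rintro _ ⟨i, hi, rfl⟩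
    exact hf i hi
  exact this hx

/-- Dependent choice along `ℕ`. -/
lemma exists_dependent_seq {α : ℕ → Type} [∀ n, Nonempty (α n)] (P : ∀ n, α n → Prop)
    (R : ∀ n, α n → α (n + 1) → Prop) (h0 : ∃ a, P 0 a)
    (hs : ∀ n a, P n a → ∃ b, P (n + 1) b ∧ R n a b) :
    ∃ f : ∀ n, α n, (∀ n, P n (f n)) ∧ ∀ n, R n (f n) (f (n + 1)) := by
  choose! g hg using hs
  obtain ⟨a, ha⟩ := h0
  let f : ∀ n, α n := fun n => Nat.rec a (fun n b => g n b) n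
  have hf : ∀ n, P n (f n) := fun n => by
    induction n with
    | zero => exact ha
    | succ n ih => exact (hg n _ ih).1
  exact ⟨f, hf, fun n => (hg n _ (hf n)).2⟩

variable (K) (L : Type) [Lattice L] [BoundedOrder L]

/-- An augmented complex of based vector spaces graded by a lattice `L`, with a single basis
element in level `0`, whose part of degree `≤ p` is exact for every `p ≠ ⊥`. -/
structure GradedRes where
  /-- the basis in each level -/
  ι : ℕ → Type
  /-- the degrees of the basis elements -/
  deg : ∀ n, ι n → L
  /-- the differential -/
  d : ∀ n, (ι (n + 1) →₀ K) →ₗ[K] (ι n →₀ K)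
  d_d : ∀ n x, d n (d (n + 1) x) = 0
  d_mem : ∀ n i, d n (single i 1) ∈ supported K K {j | deg n j ≤ deg (n + 1) i}
  /-- the basis element of level `0` -/
  pt : ι 0
  eq_pt : ∀ i, i = pt
  deg_pt : deg 0 pt = ⊥
  deg_ne : ∀ n i, deg (n + 1) i ≠ ⊥
  exact_zero : ∀ p ≠ ⊥, ∀ z, ∃ w ∈ supported K K {j | deg 1 j ≤ p}, d 0 w = z
  exact_succ : ∀ n, ∀ p ≠ ⊥, ∀ z ∈ supported K K {j | deg (n + 1) j ≤ p}, d n z = 0 →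
    ∃ w ∈ supported K K {j | deg (n + 2) j ≤ p}, d (n + 1) w = z

variable {K L}

namespace GradedRes

/-- The part of degree `≤ p`. -/
abbrev le (A : GradedRes K L) (n : ℕ) (p : L) : Submodule K (A.ι n →₀ K) :=
  supported K K {j | A.deg n j ≤ p}

/-- The part of degree `< p`. -/
abbrev lt (A : GradedRes K L) (n : ℕ) (p : L) : Submodule K (A.ι n →₀ K) :=
  supported K K {j | A.deg n j < p}

lemma le_mono (A : GradedRes K L) (n : ℕ) {p q : L} (h : p ≤ q) : A.le n p ≤ A.le n q :=
  supported_mono fun _ hi => le_trans hi h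

lemma le_lt (A : GradedRes K L) (n : ℕ) {p q : L} (h : p < q) : A.le n p ≤ A.lt n q :=
  supported_mono fun _ hi => lt_of_le_of_lt hi h

lemma d_le (A : GradedRes K L) {n : ℕ} {p : L} {x : A.ι (n + 1) →₀ K} (hx : x ∈ A.le (n + 1) p) :
    A.d n x ∈ A.le n p :=
  map_mem_of_supported _ (fun i hi => A.le_mono n hi (A.d_mem n i)) hx

lemma d_lt (A : GradedRes K L) {n : ℕ} {p : L} {x : A.ι (n + 1) →₀ K} (hx : x ∈ A.lt (n + 1) p) :
    A.d n x ∈ A.lt n p :=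
  map_mem_of_supported _ (fun i hi => A.le_lt n hi (A.d_mem n i)) hx

lemma map_le {α : Type} (B : GradedRes K L) {m : ℕ} {tgt : α → L}
    {f : (α →₀ K) →ₗ[K] (B.ι m →₀ K)} (hf : ∀ i, f (single i 1) ∈ B.le m (tgt i)) {p : L}
    {x : α →₀ K} (hx : x ∈ supported K K {i | tgt i ≤ p}) : f x ∈ B.le m p :=
  map_mem_of_supported _ (fun i hi => B.le_mono m hi (hf i)) hx

lemma map_lt {α : Type} (B : GradedRes K L) {m : ℕ} {tgt : α → L}
    {f : (α →₀ K) →ₗ[K] (B.ι m →₀ K)} (hf : ∀ i, f (single i 1) ∈ B.le m (tgt i)) {p : L}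
    {x : α →₀ K} (hx : x ∈ supported K K {i | tgt i < p}) : f x ∈ B.lt m p :=
  map_mem_of_supported _ (fun i hi => B.le_lt m hi (hf i)) hx

/-- Inductive construction of chain maps and chain homotopies into a graded resolution. -/
lemma exists_lift (B : GradedRes K L) (ξ : ℕ → Type)
    (D : ∀ n, (ξ (n + 1) →₀ K) →ₗ[K] (ξ n →₀ K)) (tgt : ∀ n, ξ n → L)
    (g : ∀ n, (ξ n →₀ K) →ₗ[K] (B.ι n →₀ K))
    (hDD : ∀ n x, D n (D (n + 1) x) = 0)
    (hD : ∀ n i, D n (single i 1) ∈ supported K K {j | tgt n j ≤ tgt (n + 1) i})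
    (hg : ∀ n i, g n (single i 1) ∈ B.le n (tgt n i))
    (hgD : ∀ n x, B.d n (g (n + 1) x) = - g n (D n x))
    (h0 : ∀ i, tgt 0 i ≠ ⊥ ∨ g 0 (single i 1) = 0)
    (hS : ∀ n i, tgt (n + 1) i ≠ ⊥) :
    ∃ t : ∀ n, (ξ n →₀ K) →ₗ[K] (B.ι (n + 1) →₀ K),
      (∀ n i, t n (single i 1) ∈ B.le (n + 1) (tgt n i)) ∧
      (∀ x, B.d 0 (t 0 x) = g 0 x) ∧
      ∀ n x, B.d (n + 1) (t (n + 1) x) = g (n + 1) x + t n (D n x) := by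
  have key : ∀ (n : ℕ) (f : (ξ n →₀ K) →ₗ[K] (B.ι n →₀ K)),
      (∀ i, ∃ w ∈ B.le (n + 1) (tgt n i), B.d n w = f (single i 1)) →
      ∃ t : (ξ n →₀ K) →ₗ[K] (B.ι (n + 1) →₀ K),
        (∀ i, t (single i 1) ∈ B.le (n + 1) (tgt n i)) ∧ ∀ x, B.d n (t x) = f x := by
    intro n f hf
    choose w hw hdw using hf
    refine ⟨linearCombination K w, fun i => by simpa using hw i, fun x => ?_⟩
    have : B.d n ∘ₗ linearCombination K w = f := by
      ext i : 2
      simpa using hdw i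
    exact LinearMap.congr_fun this x
  obtain ⟨t, ht, ht'⟩ := exists_dependent_seq
    (α := fun n => (ξ n →₀ K) →ₗ[K] (B.ι (n + 1) →₀ K))
    (fun n t => (∀ i, t (single i 1) ∈ B.le (n + 1) (tgt n i)) ∧
      (∀ x, B.d n (t (D n x)) = g n (D n x)) ∧ (n = 0 → ∀ x, B.d n (t x) = g n x))
    (fun n t t' => ∀ x, B.d (n + 1) (t' x) = g (n + 1) x + t (D n x))
    (by
      obtain ⟨t, ht, ht'⟩ := key 0 (g 0) fun i => by
        rcases h0 i with h | h
        · exact B.exact_zero _ h _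
        · exact ⟨0, Submodule.zero_mem _, by rw [h, map_zero]⟩
      exact ⟨t, ht, fun x => ht' _, fun _ => ht'⟩)
    (by
      rintro n t ⟨ht, htd, -⟩
      obtain ⟨t', h1, h2⟩ := key (n + 1) (g (n + 1) + t ∘ₗ D n) fun i => by
        refine B.exact_succ n _ (hS n i) _ (Submodule.add_mem _ (hg _ i)
          (B.map_le ht (hD n i))) ?_
        rw [LinearMap.add_apply, map_add, LinearMap.comp_apply, htd, hgD, neg_add_cancel]
      refine ⟨t', ⟨h1, fun x => ?_, by simp⟩, h2⟩
      rw [h2]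
      simp [hDD])
  exact ⟨t, fun n => (ht n).1, fun x => (ht 0).2.2 rfl x, ht'⟩

/-- Degree-nonincreasing chain maps over the identity in level `0`. -/
structure Hom (A B : GradedRes K L) where
  /-- the components -/
  f : ∀ n, (A.ι n →₀ K) →ₗ[K] (B.ι n →₀ K)
  f_mem : ∀ n i, f n (single i 1) ∈ B.le n (A.deg n i)
  f_pt : f 0 (single A.pt 1) = single B.pt 1
  comm : ∀ n x, B.d n (f (n + 1) x) = f n (A.d n x)

lemma exists_hom (A B : GradedRes K L) : Nonempty (Hom A B) := by
  let f0 : (A.ι 0 →₀ K) →ₗ[K] (B.ι 0 →₀ K) := linearCombination K fun _ => single B.pt 1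
  have hf0 : ∀ i, f0 (single i 1) ∈ B.le 0 (A.deg 0 i) := fun i => by
    simp only [f0, linearCombination_single, one_smul]
    exact single_mem_supported K _ (by simp [B.deg_pt])
  obtain ⟨t, h1, h2, h3⟩ := B.exists_lift (fun n => A.ι (n + 1)) (fun n => A.d (n + 1))
    (fun n => A.deg (n + 1))
    (fun n => match n with
      | 0 => f0 ∘ₗ A.d 0
      | n + 1 => 0)
    (fun n => A.d_d (n + 1)) (fun n => A.d_mem (n + 1))
    (fun n i => match n with
      | 0 => B.map_le hf0 (A.d_mem 0 i)
      | n + 1 => Submodule.zero_mem _)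
    (fun n x => match n with
      | 0 => by simp [A.d_d]
      | n + 1 => by simp)
    (fun i => Or.inl (A.deg_ne 0 i)) (fun n i => A.deg_ne (n + 1) i)
  refine ⟨⟨fun n => match n with
      | 0 => f0
      | n + 1 => t n, fun n i => ?_, by simp [f0], fun n x => ?_⟩⟩
  · cases n with
    | zero => exact hf0 i
    | succ n => exact h1 n i
  · cases n with
    | zero => exact h2 x
    | succ n => simpa using h3 n x

/-- The identity. -/
def Hom.id (A : GradedRes K L) : Hom A A where
  f _ := LinearMap.id
  f_mem _ _ := single_mem_supported K _ (le_refl _)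
  f_pt := rfl
  comm _ _ := rfl

/-- Composition. -/
def Hom.comp {A B C : GradedRes K L} (g : Hom B C) (f : Hom A B) : Hom A C where
  f n := g.f n ∘ₗ f.f n
  f_mem n i := C.map_le (g.f_mem n) (f.f_mem n i)
  f_pt := by simp [f.f_pt, g.f_pt]
  comm n x := by simp [g.comm, f.comm]

lemma Hom.exists_homotopy {A B : GradedRes K L} (f g : Hom A B) :
    ∃ h : ∀ n, (A.ι n →₀ K) →ₗ[K] (B.ι (n + 1) →₀ K),
      (∀ n i, h n (single i 1) ∈ B.le (n + 1) (A.deg n i)) ∧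
      ∀ n x, B.d (n + 1) (h (n + 1) x) + h n (A.d n x) = f.f (n + 1) x - g.f (n + 1) x := by
  obtain ⟨t, h1, -, h3⟩ := B.exists_lift A.ι (fun n => - A.d n) A.deg (fun n => f.f n - g.f n)
    (fun n x => by simp [A.d_d]) (fun n i => Submodule.neg_mem _ (A.d_mem n i))
    (fun n i => Submodule.sub_mem _ (f.f_mem n i) (g.f_mem n i))
    (fun n x => by simp [f.comm, g.comm, neg_add_eq_sub])
    (fun i => Or.inr (by rw [A.eq_pt i, LinearMap.sub_apply, f.f_pt, g.f_pt, sub_self]))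
    A.deg_ne
  exact ⟨t, h1, fun n x => by rw [h3]; simp⟩

lemma exists_contraction (A : GradedRes K L) (x : L) (hx : x ≠ ⊥) :
    ∃ s : ∀ n, (A.ι n →₀ K) →ₗ[K] (A.ι (n + 1) →₀ K),
      (∀ n i, s n (single i 1) ∈ A.le (n + 1) (A.deg n i ⊔ x)) ∧
      (∀ z, A.d 0 (s 0 z) = z) ∧
      ∀ n z, A.d (n + 1) (s (n + 1) z) + s n (A.d n z) = z := by
  have hne : ∀ p : L, p ⊔ x ≠ ⊥ := fun p h => hx (le_bot_iff.1 (h ▸ le_sup_right))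
  obtain ⟨t, h1, h2, h3⟩ := A.exists_lift A.ι (fun n => - A.d n) (fun n i => A.deg n i ⊔ x)
    (fun n => LinearMap.id)
    (fun n x => by simp [A.d_d])
    (fun n i => Submodule.neg_mem _ (supported_mono (fun j hj => sup_le_sup_right hj x)
      (A.d_mem n i)))
    (fun n i => single_mem_supported K _ (le_sup_left : _ ≤ _))
    (fun n x => by simp)
    (fun i => Or.inl (hne _)) (fun n i => hne _)
  exact ⟨t, h1, h2, fun n z => by rw [h3]; simp⟩

/-- Exactness, in level `n + 1`, of the part of degree exactly `p`. -/
def GrExact (A : GradedRes K L) (n : ℕ) (p : L) : Prop :=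
  ∀ z ∈ A.le (n + 1) p, A.d n z ∈ A.lt n p →
    ∃ u ∈ A.le (n + 2) p, z - A.d (n + 1) u ∈ A.lt (n + 1) p

/-- Minimality: the differential strictly decreases degrees. -/
def Minimal (A : GradedRes K L) : Prop :=
  ∀ n i, A.d n (single i 1) ∈ A.lt n (A.deg (n + 1) i)

lemma Minimal.d_mem_lt {F : GradedRes K L} (hF : F.Minimal) {n : ℕ} {p : L}
    {x : F.ι (n + 1) →₀ K} (hx : x ∈ F.le (n + 1) p) : F.d n x ∈ F.lt n p :=
  map_mem_of_supported (S := {i | F.deg (n + 1) i ≤ p}) _ (fun i hi => supported_mono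
    (fun _ hj => lt_of_lt_of_le hj hi) (hF n i)) hx

/-- A minimal resolution has generators of degree `p` exactly where the degree-`p` part of any
other resolution fails to be exact. -/
lemma Minimal.exists_deg_eq_iff {F : GradedRes K L} (hF : F.Minimal) (C : GradedRes K L) (n : ℕ)
    (p : L) : (∃ i, F.deg (n + 1) i = p) ↔ ¬ C.GrExact n p := by
  obtain ⟨φ⟩ := exists_hom F C
  obtain ⟨ψ⟩ := exists_hom C F
  constructor
  · rintro ⟨i, rfl⟩ hC
    obtain ⟨h, hh, hd⟩ := Hom.exists_homotopy (ψ.comp φ) (Hom.id F)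
    obtain ⟨u, hu, hv⟩ := hC _ (φ.f_mem (n + 1) i) (by
      rw [φ.comm]
      exact C.map_lt (φ.f_mem n) (hF n i))
    have h1 := F.map_lt (ψ.f_mem (n + 1)) hv
    rw [map_sub, ← ψ.comm] at h1
    have h2 := hF.d_mem_lt (F.map_le (ψ.f_mem (n + 2)) hu)
    have h3 := hF.d_mem_lt (hh (n + 1) i)
    have h4 := F.map_lt (hh n) (hF n i)
    have h5 := hd n (single i 1)
    have h6 : single i 1 ∈ F.lt (n + 1) (F.deg (n + 1) i) := by
      have e : (single i 1 : F.ι (n + 1) →₀ K) = (ψ.f (n + 1) (φ.f (n + 1) (single i 1))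
          - F.d (n + 1) (ψ.f (n + 2) u)) + F.d (n + 1) (ψ.f (n + 2) u)
          - F.d (n + 1) (h (n + 1) (single i 1)) - h n (F.d n (single i 1)) := by
        rw [sub_sub, h5]
        simp [Hom.id, Hom.comp]
      rw [e]
      exact Submodule.sub_mem _ (Submodule.sub_mem _ (Submodule.add_mem _ h1 h2) h3) h4
    have := (mem_supported' K _).1 h6 i (by simp)
    simp at this
  · intro hC
    by_contra! hne
    obtain ⟨h, hh, hd⟩ := Hom.exists_homotopy (φ.comp ψ) (Hom.id C)
    refine hC fun z hz hdz => ⟨- h (n + 1) z, Submodule.neg_mem _ (C.map_le (hh (n + 1)) hz), ?_⟩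
    have h1 : ψ.f (n + 1) z ∈ F.lt (n + 1) p :=
      supported_mono (fun j hj => lt_of_le_of_ne hj (hne j)) (F.map_le (ψ.f_mem (n + 1)) hz)
    have h2 := C.map_lt (φ.f_mem (n + 1)) h1
    have h3 := C.map_lt (hh n) hdz
    have e : z - C.d (n + 1) (- h (n + 1) z)
        = φ.f (n + 1) (ψ.f (n + 1) z) - h n (C.d n z) := by
      rw [map_neg, sub_neg_eq_add, eq_sub_iff_add_eq, add_assoc, hd]
      simp [Hom.id, Hom.comp]
    rw [e]
    exact Submodule.sub_mem _ h2 h3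

end GradedRes

section MinimalResolution

/-- Vectors of `Z` forming a basis modulo `Y`, with dual functionals vanishing on `Y`. -/
lemma exists_relative_basis {M : Type} [AddCommGroup M] [Module K M] (Y Z : Submodule K M) :
    ∃ (J : Type) (v : J → M), (∀ j, v j ∈ Z) ∧ Z ≤ Y ⊔ Submodule.span K (Set.range v) ∧
      ∀ j, ∃ φ : M →ₗ[K] K, (∀ y ∈ Y, φ y = 0) ∧ φ (v j) = 1 ∧ ∀ j' ≠ j, φ (v j') = 0 := by
  let W := Z.map Y.mkQ
  let b := Module.Basis.ofVectorSpace K W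
  have hb : ∀ j, ∃ z ∈ Z, Y.mkQ z = (b j : M ⧸ Y) := fun j => (b j).2
  choose v hv hvb using hb
  refine ⟨_, v, hv, ?_, fun j => ?_⟩
  · have h1 : Z.map Y.mkQ ≤ (Submodule.span K (Set.range v)).map Y.mkQ := by
      intro w hw
      have h2 : (⟨w, hw⟩ : W) ∈ Submodule.span K (Set.range b) := b.mem_span _
      have h3 : Submodule.span K (Set.range b) ≤
          ((Submodule.span K (Set.range v)).map Y.mkQ).comap W.subtype := by
        rw [Submodule.span_le]
        rintro _ ⟨j, rfl⟩
        exact ⟨v j, Submodule.subset_span ⟨j, rfl⟩, hvb j⟩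
      exact h3 h2
    rw [Submodule.map_le_iff_le_comap, Submodule.comap_map_mkQ] at h1
    exact h1
  · obtain ⟨ψ, hψ⟩ := LinearMap.exists_extend (b.coord j)
    have hψv : ∀ j', ψ (Y.mkQ (v j')) = b.coord j (b j') := fun j' => by
      rw [hvb, ← hψ]
      rfl
    refine ⟨ψ ∘ₗ Y.mkQ, fun y hy => ?_, ?_, fun j' hj' => ?_⟩
    · rw [LinearMap.comp_apply, Submodule.mkQ_apply, (Submodule.Quotient.mk_eq_zero Y).2 hy,
        map_zero]
    · rw [LinearMap.comp_apply, hψv]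
      simp
    · rw [LinearMap.comp_apply, hψv]
      simp [hj']

variable (K L) in
/-- A level of the minimal resolution, with the cycles `Z p` of degree `≤ p`. -/
structure ResLevel where
  /-- the basis -/
  ι : Type
  /-- the degrees -/
  deg : ι → L
  /-- the cycles of degree `≤ p` -/
  Z : L → Submodule K (ι →₀ K)
  Z_mono : Monotone Z
  Z_bot : Z ⊥ = ⊥
  Z_le : ∀ p, Z p ≤ supported K K {i | deg i ≤ p}

namespace ResLevel

variable (S : ResLevel K L)

/-- The cycles generated in degrees `< p`. -/
def Y (p : L) : Submodule K (S.ι →₀ K) := ⨆ q : Set.Iio p, S.Z q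

/-- Index set of the new generators in degree `p`. -/
def J (p : L) : Type := (exists_relative_basis (S.Y p) (S.Z p)).choose

/-- The cycles killed by the new generators in degree `p`. -/
def v (p : L) : S.J p → (S.ι →₀ K) := (exists_relative_basis (S.Y p) (S.Z p)).choose_spec.choose

lemma v_spec (p : L) : (∀ j, S.v p j ∈ S.Z p) ∧
    S.Z p ≤ S.Y p ⊔ Submodule.span K (Set.range (S.v p)) ∧
    ∀ j, ∃ φ : (S.ι →₀ K) →ₗ[K] K, (∀ y ∈ S.Y p, φ y = 0) ∧ φ (S.v p j) = 1 ∧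
      ∀ j' ≠ j, φ (S.v p j') = 0 :=
  (exists_relative_basis (S.Y p) (S.Z p)).choose_spec.choose_spec

/-- The differential from the next level. -/
def δ : ((Σ p, S.J p) →₀ K) →ₗ[K] (S.ι →₀ K) := linearCombination K fun i => S.v i.1 i.2

lemma δ_single (i : Σ p, S.J p) : S.δ (single i 1) = S.v i.1 i.2 := by
  simp [δ]

lemma δ_single_mem (i : Σ p, S.J p) : S.δ (single i 1) ∈ S.Z i.1 := by
  rw [δ_single]
  exact (S.v_spec i.1).1 i.2

lemma fst_ne_bot (i : Σ p, S.J p) : i.1 ≠ ⊥ := by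
  obtain ⟨p, j⟩ := i
  rintro rfl
  obtain ⟨φ, -, h1, -⟩ := (S.v_spec ⊥).2.2 j
  have h2 := (S.v_spec ⊥).1 j
  rw [S.Z_bot, Submodule.mem_bot] at h2
  rw [h2, map_zero] at h1
  exact zero_ne_one h1

/-- The next level of the minimal resolution. -/
def next : ResLevel K L where
  ι := Σ p, S.J p
  deg i := i.1
  Z p := LinearMap.ker S.δ ⊓ supported K K {i | i.1 ≤ p}
  Z_mono _ _ h := inf_le_inf_left _ (supported_mono fun _ hi => le_trans hi h)
  Z_bot := by
    have : {i : Σ p, S.J p | i.1 ≤ ⊥} = ∅ :=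
      Set.eq_empty_of_forall_notMem fun i hi => S.fst_ne_bot i (le_bot_iff.1 hi)
    rw [this, supported_empty, inf_bot_eq]
  Z_le _ := inf_le_right

lemma exists_δ_eq [Finite L] (p : L) :
    S.Z p ≤ (supported K K {i : Σ p, S.J p | i.1 ≤ p}).map S.δ := by
  induction p using WellFoundedLT.induction with
  | ind p ih =>
    refine (S.v_spec p).2.1.trans (sup_le (iSup_le fun q => ?_) ?_)
    · exact (ih q q.2).trans (Submodule.map_mono
        (supported_mono fun i hi => le_trans hi (le_of_lt q.2)))
    · rw [Submodule.span_le]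
      rintro _ ⟨j, rfl⟩
      exact ⟨single ⟨p, j⟩ 1, single_mem_supported K _ (le_refl p), S.δ_single _⟩

/-- A cycle of degree `≤ p` in the next level has no component in degree `p`. -/
lemma next_Z_le_lt (p : L) : S.next.Z p ≤ supported K K {i | S.next.deg i < p} := by
  rintro x ⟨hx, hxp⟩
  rw [mem_supported']
  rintro ⟨q, j⟩ hq
  by_cases hqp : q ≤ p
  · obtain rfl : q = p := by
      by_contra hne
      exact hq (lt_of_le_of_ne hqp hne)
    obtain ⟨φ, h1, h2, h3⟩ := (S.v_spec q).2.2 j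
    have key : φ (S.δ x) - lapply (R := K) (⟨q, j⟩ : Σ p, S.J p) x ∈ (⊥ : Submodule K K) := by
      refine map_mem_of_supported (φ ∘ₗ S.δ - lapply (R := K) (⟨q, j⟩ : Σ p, S.J p))
        (S := {i | i.1 ≤ q}) ?_ hxp
      rintro ⟨r, j'⟩ hr
      rw [Submodule.mem_bot, LinearMap.sub_apply, LinearMap.comp_apply, δ_single, sub_eq_zero,
        lapply_apply]
      rcases eq_or_lt_of_le (show r ≤ q from hr) with rfl | hlt
      · by_cases hj : j' = j
        · subst hj
          simp [h2]
        · rw [h3 j' hj, single_eq_of_ne]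
          intro h
          cases h
          exact hj rfl
      · rw [single_eq_of_ne (by
          intro h
          cases h
          exact lt_irrefl _ hlt)]
        exact h1 _ (le_iSup (fun q' : Set.Iio q => S.Z q') ⟨r, hlt⟩ ((S.v_spec r).1 j'))
    rw [show S.δ x = 0 from hx, map_zero, zero_sub, Submodule.mem_bot, neg_eq_zero] at key
    exact key
  · exact (mem_supported' K _).1 hxp _ hqp

end ResLevel

variable (K L) in
/-- The bottom level of the minimal resolution. -/
def resLevelZero : ResLevel K L where
  ι := Unit
  deg _ := ⊥
  Z p := ⨆ _ : p ≠ ⊥, ⊤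
  Z_mono p q h := iSup_le fun hp => le_iSup_of_le (fun hq => hp (le_bot_iff.1 (hq ▸ h))) le_rfl
  Z_bot := by simp
  Z_le p := by simp

variable (K L) in
/-- The levels of the minimal resolution. -/
def resLevel : ℕ → ResLevel K L
  | 0 => resLevelZero K L
  | n + 1 => (resLevel n).next

lemma resLevel_d_d (n : ℕ) (x) : (resLevel K L n).δ ((resLevel K L n).next.δ x) = 0 := by
  have : (resLevel K L n).δ ∘ₗ (resLevel K L n).next.δ = 0 := by
    ext i : 2
    exact ((resLevel K L n).next.δ_single_mem i).1
  exact LinearMap.congr_fun this x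

variable (K L) in
/-- The minimal resolution. -/
def minRes [Finite L] : GradedRes K L where
  ι n := (resLevel K L n).ι
  deg n := (resLevel K L n).deg
  d n := (resLevel K L n).δ
  d_d n x := resLevel_d_d n x
  d_mem n i := (resLevel K L n).Z_le _ ((resLevel K L n).δ_single_mem i)
  pt := ()
  eq_pt _ := rfl
  deg_pt := rfl
  deg_ne n i := (resLevel K L n).fst_ne_bot i
  exact_zero p hp z := by
    have hZ : (resLevelZero K L).Z p = ⊤ := iSup_pos hp
    exact (resLevelZero K L).exists_δ_eq p (hZ ▸ Submodule.mem_top)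
  exact_succ n p _ z hz hdz := (resLevel K L (n + 1)).exists_δ_eq p ⟨hdz, hz⟩

lemma minRes_minimal [Finite L] : (minRes K L).Minimal := by
  intro n i
  cases n with
  | zero =>
    refine supported_mono (fun j _ => ?_) ((minRes K L).d_mem 0 i)
    exact bot_lt_iff_ne_bot.2 ((minRes K L).deg_ne 0 i)
  | succ n => exact (resLevel K L n).next_Z_le_lt _ ((resLevel K L (n + 1)).δ_single_mem i)

end MinimalResolution

section Cone

variable {P : Type}

lemma cbdry_single [Preorder P] {n : ℕ} (c : OChain P (n + 1)) : cbdry K P n (single c 1) =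
    ∑ k : Fin (n + 1), ((-1 : K) ^ (k : ℕ)) • single (odel P k c) 1 := by
  simp [cbdry]

/-- Prepending an element to an order chain. -/
def ocons [Preorder P] {n : ℕ} (p : P) (c : OChain P n) (h : ∀ i, c.1 i < p) :
    OChain P (n + 1) :=
  ⟨Fin.cons p c.1, by
    intro i j hij
    induction j using Fin.cases with
    | zero => exact absurd hij (Fin.not_lt_zero i)
    | succ j =>
      induction i using Fin.cases with
      | zero => simpa using h j
      | succ i => simpa using c.2 (Fin.succ_lt_succ_iff.1 hij)⟩

lemma odel_zero_ocons [Preorder P] {n : ℕ} (p : P) (c : OChain P n) (h : ∀ i, c.1 i < p) :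
    odel P 0 (ocons p c h) = c := by
  apply Subtype.ext
  funext i
  simp [odel, ocons]

lemma odel_succ_ocons [Preorder P] {n : ℕ} (p : P) (c : OChain P (n + 1)) (h : ∀ i, c.1 i < p)
    (k : Fin (n + 1)) :
    odel P k.succ (ocons p c h) = ocons p (odel P k c) fun _ => h _ := by
  apply Subtype.ext
  funext i
  induction i using Fin.cases <;> simp [odel, ocons, Fin.removeNth]

lemma odel_zero_lt [Preorder P] {n : ℕ} (c : OChain P (n + 1)) (i : Fin n) :
    (odel P 0 c).1 i < c.1 0 :=
  c.2 (by simp)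

lemma ocons_odel_zero [Preorder P] {n : ℕ} (c : OChain P (n + 1)) :
    ocons (c.1 0) (odel P 0 c) (odel_zero_lt c) = c := by
  apply Subtype.ext
  funext i
  induction i using Fin.cases <;> simp [odel, ocons]

open Classical in
variable (K) in
/-- The cone over the chains strictly below `p`. -/
def ccone [Preorder P] (p : P) (n : ℕ) : CGrp K P n →ₗ[K] CGrp K P (n + 1) :=
  linearCombination K fun c =>
    if h : ∀ i, c.1 i < p then single (ocons p c h) 1 else 0

lemma ccone_single_of_lt [Preorder P] {p : P} {n : ℕ} {c : OChain P n} (h : ∀ i, c.1 i < p) :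
    ccone K p n (single c 1) = single (ocons p c h) 1 := by
  simp [ccone, h]

lemma ccone_single_of_not_lt [Preorder P] {p : P} {n : ℕ} {c : OChain P n}
    (h : ¬ ∀ i, c.1 i < p) : ccone K p n (single c 1) = 0 := by
  rw [ccone, linearCombination_single, dif_neg h, smul_zero]

lemma ccone_ccone [Preorder P] (p : P) (n : ℕ) (x : CGrp K P n) :
    ccone K p (n + 1) (ccone K p n x) = 0 := by
  have : ccone K p (n + 1) ∘ₗ ccone K p n = 0 := by
    ext c : 2
    rw [LinearMap.comp_apply, LinearMap.comp_apply, lsingle_apply]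
    by_cases h : ∀ i, c.1 i < p
    · rw [ccone_single_of_lt h, ccone_single_of_not_lt]
      · rfl
      · intro h'
        simpa [ocons] using h' 0
    · rw [ccone_single_of_not_lt h, map_zero]
      rfl
  exact LinearMap.congr_fun this x

lemma cbdry_ccone_zero [Preorder P] (p : P) (x : CGrp K P 0) :
    cbdry K P 0 (ccone K p 0 x) = x := by
  have : cbdry K P 0 ∘ₗ ccone K p 0 = LinearMap.id := by
    ext c : 2
    rw [LinearMap.comp_apply, LinearMap.comp_apply, lsingle_apply,
      ccone_single_of_lt (fun i => i.elim0), cbdry_single]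
    simp [odel_zero_ocons]
  exact LinearMap.congr_fun this x

lemma cbdry_mem_of_lt [Preorder P] {p : P} {n : ℕ} {x : CGrp K P (n + 1)}
    (hx : x ∈ supported K K {c : OChain P (n + 1) | ∀ i, c.1 i < p}) :
    cbdry K P n x ∈ supported K K {c : OChain P n | ∀ i, c.1 i < p} := by
  refine map_mem_of_supported _ (fun c hc => ?_) hx
  rw [cbdry_single]
  exact Submodule.sum_mem _ fun k _ => Submodule.smul_mem _ _
    (single_mem_supported K _ fun i => hc _)

lemma cbdry_ccone_succ [Preorder P] {p : P} {n : ℕ} {x : CGrp K P (n + 1)}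
    (hx : x ∈ supported K K {c : OChain P (n + 1) | ∀ i, c.1 i < p}) :
    cbdry K P (n + 1) (ccone K p (n + 1) x) = x - ccone K p n (cbdry K P n x) := by
  rw [← sub_eq_zero, ← Submodule.mem_bot K]
  refine map_mem_of_supported (cbdry K P (n + 1) ∘ₗ ccone K p (n + 1)
    - (LinearMap.id - ccone K p n ∘ₗ cbdry K P n)) (fun c hc => ?_) hx
  simp only [LinearMap.sub_apply, LinearMap.comp_apply, LinearMap.id_apply, Submodule.mem_bot]
  rw [ccone_single_of_lt hc, cbdry_single, Fin.sum_univ_succ, cbdry_single, map_sum,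
    sub_eq_zero, sub_eq_add_neg, ← Finset.sum_neg_distrib, odel_zero_ocons]
  congr 1
  · simp
  · refine Finset.sum_congr rfl fun k _ => ?_
    have hk : ∀ i, (odel P k c).1 i < p := fun i => hc _
    rw [odel_succ_ocons, map_smul, ccone_single_of_lt hk, Fin.val_succ, pow_succ,
      mul_neg_one, neg_smul]

lemma single_eq_ccone [Preorder P] {n : ℕ} (c : OChain P (n + 1)) :
    (single c 1 : CGrp K P (n + 1)) = ccone K (c.1 0) n (single (odel P 0 c) 1) := by
  rw [ccone_single_of_lt (odel_zero_lt c), ocons_odel_zero]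

lemma cbdry_cbdry [Preorder P] (n : ℕ) (x : CGrp K P (n + 2)) :
    cbdry K P n (cbdry K P (n + 1) x) = 0 := by
  induction n with
  | zero =>
    have : cbdry K P 0 ∘ₗ cbdry K P 1 = 0 := by
      ext c : 2
      rw [LinearMap.comp_apply, LinearMap.comp_apply, lsingle_apply, single_eq_ccone,
        cbdry_ccone_succ (single_mem_supported K _ (odel_zero_lt c)), map_sub, cbdry_ccone_zero,
        sub_self]
      rfl
    exact LinearMap.congr_fun this x
  | succ n ih =>
    have : cbdry K P (n + 1) ∘ₗ cbdry K P (n + 2) = 0 := by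
      ext c : 2
      have hc := single_mem_supported K (1 : K)
        (s := {c' : OChain P (n + 2) | ∀ i, c'.1 i < c.1 0}) (odel_zero_lt c)
      rw [LinearMap.comp_apply, LinearMap.comp_apply, lsingle_apply, single_eq_ccone,
        cbdry_ccone_succ hc, map_sub, cbdry_ccone_succ (cbdry_mem_of_lt hc), ih, map_zero,
        sub_zero, sub_self]
      rfl
    exact LinearMap.congr_fun this x

/-- The cone with apex `p` contracts the complex of chains bounded by `p`. -/
lemma cbdry_ccone_add [PartialOrder P] {p : P} {n : ℕ} {x : CGrp K P (n + 1)}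
    (hx : x ∈ supported K K {c : OChain P (n + 1) | c.1 0 ≤ p}) :
    cbdry K P (n + 1) (ccone K p (n + 1) x) + ccone K p n (cbdry K P n x) = x := by
  rw [← sub_eq_zero, ← Submodule.mem_bot K]
  refine map_mem_of_supported (cbdry K P (n + 1) ∘ₗ ccone K p (n + 1)
    + ccone K p n ∘ₗ cbdry K P n - LinearMap.id) (fun c hc => ?_) hx
  simp only [LinearMap.sub_apply, LinearMap.add_apply, LinearMap.comp_apply, LinearMap.id_apply,
    Submodule.mem_bot]
  rw [sub_eq_zero]
  rcases eq_or_lt_of_le (show c.1 0 ≤ p from hc) with h | h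
  · rw [ccone_single_of_not_lt fun h' => (h' 0).ne h, map_zero, zero_add, single_eq_ccone, h]
    have hlt : ∀ i, (odel P 0 c).1 i < p := fun i => h ▸ odel_zero_lt c i
    cases n with
    | zero => rw [cbdry_ccone_zero]
    | succ n =>
      rw [cbdry_ccone_succ (single_mem_supported K _ hlt), map_sub, ccone_ccone, sub_zero]
  · rw [cbdry_ccone_succ (single_mem_supported K _
      fun i => lt_of_le_of_lt (c.2.antitone (Fin.zero_le i)) h), sub_add_cancel]

end Cone

section ChainResolution

variable (L) in
/-- The nonzero elements of `L`. -/
abbrev NonBot : Type := {x : L // x ≠ ⊥}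

/-- The degree of a chain: its largest element. -/
def chainDeg : ∀ n, OChain (NonBot L) n → L
  | 0, _ => ⊥
  | _ + 1, c => (c.1 0).1

lemma chainDeg_lt_iff (p : NonBot L) {n : ℕ} (c : OChain (NonBot L) n) :
    chainDeg n c < p ↔ ∀ i, c.1 i < p := by
  cases n with
  | zero => exact ⟨fun _ i => i.elim0, fun _ => bot_lt_iff_ne_bot.2 p.2⟩
  | succ n =>
    exact ⟨fun h i => lt_of_le_of_lt (c.2.antitone (Fin.zero_le i)) h, fun h => h 0⟩

variable (K) in
/-- The combinations of chains of degree `≤ p`. -/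
abbrev chainLe (n : ℕ) (p : L) : Submodule K (CGrp K (NonBot L) n) :=
  supported K K {c | chainDeg n c ≤ p}

variable (K) in
/-- The combinations of chains of degree `< p`. -/
abbrev chainLt (n : ℕ) (p : L) : Submodule K (CGrp K (NonBot L) n) :=
  supported K K {c | chainDeg n c < p}

lemma ccone_single_mem (p : NonBot L) {n : ℕ} (c : OChain (NonBot L) n) :
    ccone K p n (single c 1) ∈ chainLe K (n + 1) p.1 := by
  by_cases h : ∀ i, c.1 i < p
  · rw [ccone_single_of_lt h]
    exact single_mem_supported K _ (le_refl p.1)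
  · rw [ccone_single_of_not_lt h]
    exact Submodule.zero_mem _

lemma ccone_mem (p : NonBot L) {n : ℕ} (x : CGrp K (NonBot L) n) :
    ccone K p n x ∈ chainLe K (n + 1) p.1 :=
  map_mem_of_supported (S := Set.univ) _ (fun c _ => ccone_single_mem p c) (by simp)

variable (K L) in
/-- The resolution by chains of nonzero elements. -/
def chainRes : GradedRes K L where
  ι := OChain (NonBot L)
  deg := chainDeg
  d := cbdry K (NonBot L)
  d_d := cbdry_cbdry
  d_mem n c := by
    rw [cbdry_single]
    refine Submodule.sum_mem _ fun k _ => Submodule.smul_mem _ _ (single_mem_supported K _ ?_)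
    cases n with
    | zero => exact bot_le
    | succ n => exact c.2.antitone (Fin.zero_le _)
  pt := ⟨Fin.elim0, fun i => i.elim0⟩
  eq_pt c := Subtype.ext (funext fun i => i.elim0)
  deg_pt := rfl
  deg_ne n c := (c.1 0).2
  exact_zero p hp z := ⟨_, ccone_mem ⟨p, hp⟩ z, cbdry_ccone_zero _ _⟩
  exact_succ n p hp z hz hdz := by
    refine ⟨_, ccone_mem ⟨p, hp⟩ z, ?_⟩
    have h := cbdry_ccone_add (p := (⟨p, hp⟩ : NonBot L)) hz
    rwa [hdz, map_zero, add_zero] at h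

/-- A chain in the open interval `(⊥, p)` as a chain of nonzero elements. -/
def ofIoo {p : L} {n : ℕ} (c : OChain (Set.Ioo (⊥ : L) p) n) : OChain (NonBot L) n :=
  ⟨fun i => ⟨c.1 i, (c.1 i).2.1.ne'⟩, fun _ _ h => c.2 h⟩

/-- A chain of nonzero elements below `p` as a chain in the open interval `(⊥, p)`. -/
def toIoo (p : NonBot L) {n : ℕ} (c : OChain (NonBot L) n) (h : ∀ i, c.1 i < p) :
    OChain (Set.Ioo (⊥ : L) p) n :=
  ⟨fun i => ⟨(c.1 i).1, bot_lt_iff_ne_bot.2 (c.1 i).2, h i⟩, fun _ _ h => c.2 h⟩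

variable (K) in
/-- The cone with apex `p` over the chains in the open interval `(⊥, p)`. -/
def iooCone (p : NonBot L) (n : ℕ) :
    CGrp K (Set.Ioo (⊥ : L) p) n →ₗ[K] CGrp K (NonBot L) (n + 1) :=
  ccone K p n ∘ₗ lmapDomain K K ofIoo

open Classical in
variable (K) in
/-- The base of the chains with apex `p`. -/
def iooBase (p : NonBot L) (n : ℕ) :
    CGrp K (NonBot L) (n + 1) →ₗ[K] CGrp K (Set.Ioo (⊥ : L) p) n :=
  linearCombination K fun c =>
    if h : c.1 0 = p then single (toIoo p (odel _ 0 c) fun i => h ▸ odel_zero_lt c i) 1 else 0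

lemma ofIoo_lt (p : NonBot L) {n : ℕ} (c : OChain (Set.Ioo (⊥ : L) p) n) (i : Fin n) :
    (ofIoo c).1 i < p := (c.1 i).2.2

lemma iooCone_single (p : NonBot L) {n : ℕ} (c : OChain (Set.Ioo (⊥ : L) p) n) :
    iooCone K p n (single c 1) = single (ocons p (ofIoo c) (ofIoo_lt p c)) 1 := by
  rw [iooCone, LinearMap.comp_apply, lmapDomain_apply, mapDomain_single,
    ccone_single_of_lt (ofIoo_lt p c)]

lemma iooBase_single_of_eq (p : NonBot L) {n : ℕ} {c : OChain (NonBot L) (n + 1)}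
    (h : c.1 0 = p) : iooBase K p n (single c 1) =
      single (toIoo p (odel _ 0 c) fun i => h ▸ odel_zero_lt c i) 1 := by
  rw [iooBase, linearCombination_single, dif_pos h, one_smul]

lemma iooBase_iooCone (p : NonBot L) {n : ℕ} (x : CGrp K (Set.Ioo (⊥ : L) p) n) :
    iooBase K p n (iooCone K p n x) = x := by
  have : iooBase K p n ∘ₗ iooCone K p n = LinearMap.id := by
    ext c : 2
    rw [LinearMap.comp_apply, LinearMap.comp_apply, lsingle_apply, iooCone_single,
      iooBase_single_of_eq p rfl]
    simp only [odel_zero_ocons]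
    rfl
  exact LinearMap.congr_fun this x

lemma iooBase_of_lt (p : NonBot L) {n : ℕ} {x : CGrp K (NonBot L) (n + 1)}
    (hx : x ∈ chainLt K (n + 1) p.1) : iooBase K p n x = 0 := by
  rw [← Submodule.mem_bot K]
  refine map_mem_of_supported (S := {c | chainDeg (n + 1) c < p.1}) _ (fun c hc => ?_) hx
  rw [iooBase, linearCombination_single, dif_neg, smul_zero]
  · exact Submodule.zero_mem _
  · rintro rfl
    exact lt_irrefl _ hc

lemma sub_iooCone_iooBase_mem (p : NonBot L) {n : ℕ} {x : CGrp K (NonBot L) (n + 1)}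
    (hx : x ∈ chainLe K (n + 1) p.1) :
    x - iooCone K p n (iooBase K p n x) ∈ chainLt K (n + 1) p.1 := by
  refine map_mem_of_supported (S := {c | chainDeg (n + 1) c ≤ p.1})
    (LinearMap.id - iooCone K p n ∘ₗ iooBase K p n) (fun c hc => ?_) hx
  rw [LinearMap.sub_apply, LinearMap.id_apply, LinearMap.comp_apply]
  rcases eq_or_lt_of_le (show chainDeg (n + 1) c ≤ p from hc) with h | h
  · obtain rfl : c.1 0 = p := Subtype.ext h
    rw [iooBase_single_of_eq _ rfl, iooCone_single]
    have : ocons (c.1 0) (ofIoo (toIoo (c.1 0) (odel _ 0 c) (odel_zero_lt c)))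
        (ofIoo_lt _ _) = c := ocons_odel_zero c
    rw [this, sub_self]
    exact Submodule.zero_mem _
  · have hlt := single_mem_supported K (1 : K)
      (s := {c | chainDeg (n + 1) c < p.1}) h
    rw [iooBase_of_lt p hlt, map_zero, sub_zero]
    exact hlt

lemma cbdry_lmapDomain_ofIoo (p : L) {n : ℕ} (x : CGrp K (Set.Ioo (⊥ : L) p) (n + 1)) :
    cbdry K (NonBot L) n (lmapDomain K K ofIoo x) = lmapDomain K K ofIoo (cbdry K _ n x) := by
  have : cbdry K (NonBot L) n ∘ₗ lmapDomain K K ofIoo =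
      lmapDomain K K ofIoo ∘ₗ cbdry K (Set.Ioo (⊥ : L) p) n := by
    ext c : 2
    simp only [LinearMap.comp_apply, lsingle_apply, lmapDomain_apply, mapDomain_single]
    rw [← lmapDomain_apply K K, cbdry_single, cbdry_single, map_sum]
    refine Finset.sum_congr rfl fun k _ => ?_
    rw [map_smul, lmapDomain_apply, mapDomain_single]
    rfl
  exact LinearMap.congr_fun this x

lemma cbdry_iooCone_add_mem (p : NonBot L) {n : ℕ} (x : CGrp K (Set.Ioo (⊥ : L) p) (n + 1)) :
    cbdry K _ (n + 1) (iooCone K p (n + 1) x) + iooCone K p n (cbdry K _ n x)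
      ∈ chainLt K (n + 1) p.1 := by
  have h : lmapDomain K K ofIoo x ∈ supported K K {c | ∀ i, c.1 i < p} :=
    map_mem_of_supported (S := Set.univ) (lmapDomain K K ofIoo) (fun c _ => by
      rw [lmapDomain_apply, mapDomain_single]
      exact single_mem_supported K _ (ofIoo_lt p c)) (by simp)
  simp only [iooCone, LinearMap.comp_apply]
  rw [cbdry_ccone_succ h, cbdry_lmapDomain_ofIoo, sub_add_cancel]
  exact supported_mono (fun c hc => (chainDeg_lt_iff p c).2 hc) h

lemma iooBase_cbdry (p : NonBot L) {n : ℕ} {x : CGrp K (NonBot L) (n + 2)}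
    (hx : x ∈ chainLe K (n + 2) p.1) :
    iooBase K p n (cbdry K _ (n + 1) x) = - cbdry K _ n (iooBase K p (n + 1) x) := by
  have h1 : iooBase K p n (cbdry K _ (n + 1) (x - iooCone K p (n + 1) (iooBase K p (n + 1) x)))
      = 0 := iooBase_of_lt p ((chainRes K L).d_lt (sub_iooCone_iooBase_mem p hx))
  have h2 := iooBase_of_lt p (cbdry_iooCone_add_mem p (iooBase K p (n + 1) x))
  rw [map_sub, map_sub, sub_eq_zero] at h1
  rw [map_add, iooBase_iooCone] at h2
  rw [h1, eq_neg_iff_add_eq_zero, h2]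

lemma iooCone_mem (p : NonBot L) {n : ℕ} (x : CGrp K (Set.Ioo (⊥ : L) p) n) :
    iooCone K p n x ∈ chainLe K (n + 1) p.1 := ccone_mem p _

lemma rHomNontrivial_iff_not_grExact (p : NonBot L) (n : ℕ) :
    RHomNontrivial K (Set.Ioo (⊥ : L) p) n ↔ ¬ (chainRes K L).GrExact n p := by
  have hgr : (chainRes K L).GrExact n p ↔ ∀ z ∈ chainLe K (n + 1) p.1,
      cbdry K _ n z ∈ chainLt K n p.1 → ∃ u ∈ chainLe K (n + 2) p.1,
        z - cbdry K _ (n + 1) u ∈ chainLt K (n + 1) p.1 := Iff.rfl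
  rw [RHomNontrivial, not_iff_not, hgr]
  constructor
  · intro h z hz hdz
    have hcyc : iooBase K p n z ∈ cyclesAt K (Set.Ioo (⊥ : L) p) n := by
      cases n with
      | zero => exact Submodule.mem_top
      | succ n =>
        have := iooBase_of_lt p hdz
        exact LinearMap.mem_ker.2 (neg_eq_zero.1 ((iooBase_cbdry p hz).symm.trans this))
    obtain ⟨e, he⟩ := h hcyc
    refine ⟨- iooCone K p (n + 1) e, Submodule.neg_mem _ (iooCone_mem p e), ?_⟩
    have h1 := cbdry_iooCone_add_mem p e
    have h2 := sub_iooCone_iooBase_mem p hz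
    rw [he] at h1
    have h3 := Submodule.add_mem _ h1 h2
    convert h3 using 1
    rw [map_neg]
    abel
  · intro h c hc
    obtain ⟨u, hu, hv⟩ := h (iooCone K p n c) (iooCone_mem p c) (by
      cases n with
      | zero =>
        exact supported_mono (fun j _ => bot_lt_iff_ne_bot.2 p.2)
          ((chainRes K L).d_le (iooCone_mem p c))
      | succ n =>
        have h1 := cbdry_iooCone_add_mem p c
        rwa [LinearMap.mem_ker.1 hc, map_zero, add_zero] at h1)
    have h1 := iooBase_of_lt p hv
    rw [map_sub, iooBase_iooCone, sub_eq_zero] at h1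
    refine ⟨- iooBase K p (n + 1) u, ?_⟩
    rw [map_neg, ← iooBase_cbdry p hu, h1]

end ChainResolution

lemma exists_minRes_deg_eq_iff [Finite L] (p : L) (n : ℕ) :
    (∃ i, (minRes K L).deg (n + 1) i = p) ↔ IsSynor K L n p := by
  rw [minRes_minimal.exists_deg_eq_iff (chainRes K L)]
  constructor
  · intro h
    obtain ⟨i, hi⟩ := (minRes_minimal.exists_deg_eq_iff (chainRes K L) n p).2 h
    have hp : p ≠ ⊥ := hi ▸ (minRes K L).deg_ne n i
    exact ⟨hp, (rHomNontrivial_iff_not_grExact ⟨p, hp⟩ n).2 h⟩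
  · rintro ⟨hp, h⟩
    exact (rHomNontrivial_iff_not_grExact ⟨p, hp⟩ n).1 h

section DoubleComplex

/-- The span of the elementary tensors of basis elements satisfying a relation. -/
def relSpan {α β : Type} (r : α → β → Prop) : Submodule K ((α →₀ K) ⊗[K] (β →₀ K)) :=
  Submodule.span K {t | ∃ x y, r x y ∧ t = single x 1 ⊗ₜ single y 1}

lemma map_mem_of_relSpan {α β M : Type} [AddCommMonoid M] [Module K M] {r : α → β → Prop}
    {Q : Submodule K M} (f : (α →₀ K) ⊗[K] (β →₀ K) →ₗ[K] M)
    (hf : ∀ x y, r x y → f (single x 1 ⊗ₜ single y 1) ∈ Q) {u : (α →₀ K) ⊗[K] (β →₀ K)}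
    (hu : u ∈ relSpan r) : f u ∈ Q := by
  have : relSpan r ≤ Q.comap f := by
    rw [relSpan, Submodule.span_le]
    rintro _ ⟨x, y, h, rfl⟩
    exact hf x y h
  exact this hu

lemma tmul_mem_relSpan {α β : Type} {r : α → β → Prop} {A : Set α} {B : Set β}
    (h : ∀ x ∈ A, ∀ y ∈ B, r x y) {a : α →₀ K} {b : β →₀ K} (ha : a ∈ supported K K A)
    (hb : b ∈ supported K K B) : a ⊗ₜ b ∈ relSpan (K := K) r := by
  refine map_mem_of_supported ((TensorProduct.mk K (α →₀ K) (β →₀ K)).flip b) (fun x hx => ?_) ha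
  refine map_mem_of_supported (TensorProduct.mk K (α →₀ K) (β →₀ K) (single x 1))
    (fun y hy => ?_) hb
  exact Submodule.subset_span ⟨x, y, h x hx y hy, rfl⟩

namespace GradedRes

variable (F : GradedRes K L)

/-- The double complex `F ⊗ F`. -/
abbrev Dbl (j l : ℕ) : Type := (F.ι j →₀ K) ⊗[K] (F.ι l →₀ K)

/-- The group structure whose underlying monoid is that of the tensor product reducibly. -/
instance (j l : ℕ) : AddCommGroup (F.Dbl j l) := Module.addCommMonoidToAddCommGroup K

/-- The horizontal differential. -/
def dh (j l : ℕ) : F.Dbl (j + 1) l →ₗ[K] F.Dbl j l := (F.d j).rTensor _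

/-- The vertical differential. -/
def dv (j l : ℕ) : F.Dbl j (l + 1) →ₗ[K] F.Dbl j l := (F.d l).lTensor _

/-- The part of the double complex of degree different from `⊤`. -/
def low (j l : ℕ) : Submodule K (F.Dbl j l) :=
  relSpan fun x y => F.deg j x ⊔ F.deg l y ≠ ⊤

lemma dh_tmul (j l : ℕ) (a b) : F.dh j l (a ⊗ₜ b) = F.d j a ⊗ₜ b := rfl

lemma dv_tmul (j l : ℕ) (a b) : F.dv j l (a ⊗ₜ b) = a ⊗ₜ F.d l b := rfl

lemma dh_dv (j l : ℕ) (u) : F.dh j l (F.dv (j + 1) l u) = F.dv j l (F.dh j (l + 1) u) := by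
  have : F.dh j l ∘ₗ F.dv (j + 1) l = F.dv j l ∘ₗ F.dh j (l + 1) :=
    TensorProduct.ext' fun _ _ => rfl
  exact LinearMap.congr_fun this u

lemma dh_dh (j l : ℕ) (u) : F.dh j l (F.dh (j + 1) l u) = 0 := by
  have : F.dh j l ∘ₗ F.dh (j + 1) l = 0 := TensorProduct.ext' fun a b => by
    rw [LinearMap.comp_apply, dh_tmul, dh_tmul, F.d_d, TensorProduct.zero_tmul]
    rfl
  exact LinearMap.congr_fun this u

lemma dv_dv (j l : ℕ) (u) : F.dv j l (F.dv j (l + 1) u) = 0 := by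
  have : F.dv j l ∘ₗ F.dv j (l + 1) = 0 := TensorProduct.ext' fun a b => by
    rw [LinearMap.comp_apply, dv_tmul, dv_tmul, F.d_d, TensorProduct.tmul_zero]
    rfl
  exact LinearMap.congr_fun this u

lemma tmul_mem_low {j l : ℕ} {p q : L} (h : p ⊔ q ≠ ⊤) {a : F.ι j →₀ K} {b : F.ι l →₀ K}
    (ha : a ∈ F.le j p) (hb : b ∈ F.le l q) : a ⊗ₜ b ∈ F.low j l :=
  tmul_mem_relSpan (r := fun x y => F.deg j x ⊔ F.deg l y ≠ ⊤)
    (fun _ hx _ hy h' => h (top_le_iff.1 (h'.symm.le.trans (sup_le_sup hx hy)))) ha hb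

lemma single_mem_le {n : ℕ} (i : F.ι n) : single i 1 ∈ F.le n (F.deg n i) :=
  single_mem_supported K _ (le_refl _)

lemma dh_low {j l : ℕ} {u} (hu : u ∈ F.low (j + 1) l) : F.dh j l u ∈ F.low j l :=
  map_mem_of_relSpan _ (fun x y h => F.tmul_mem_low h (F.d_mem j x) (F.single_mem_le y)) hu

lemma dv_low {j l : ℕ} {u} (hu : u ∈ F.low j (l + 1)) : F.dv j l u ∈ F.low j l :=
  map_mem_of_relSpan _ (fun x y h => F.tmul_mem_low h (F.single_mem_le x) (F.d_mem l y)) hu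

/-- Contractions of the subcomplexes bounded below by `p`. -/
lemma exists_contractions : ∃ s : L → ∀ n, (F.ι n →₀ K) →ₗ[K] (F.ι (n + 1) →₀ K), ∀ p ≠ ⊥,
    (∀ n i, s p n (single i 1) ∈ F.le (n + 1) (F.deg n i ⊔ p)) ∧
    (∀ z, F.d 0 (s p 0 z) = z) ∧ ∀ n z, F.d (n + 1) (s p (n + 1) z) + s p n (F.d n z) = z := by
  choose! s hs using F.exists_contraction
  exact ⟨s, hs⟩

/-- The chosen contractions. -/
def contr : L → ∀ n, (F.ι n →₀ K) →ₗ[K] (F.ι (n + 1) →₀ K) := F.exists_contractions.choose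

lemma contr_mem {p : L} (hp : p ≠ ⊥) (n : ℕ) (i) :
    F.contr p n (single i 1) ∈ F.le (n + 1) (F.deg n i ⊔ p) :=
  (F.exists_contractions.choose_spec p hp).1 n i

lemma d_contr_zero {p : L} (hp : p ≠ ⊥) (z) : F.d 0 (F.contr p 0 z) = z :=
  (F.exists_contractions.choose_spec p hp).2.1 z

lemma d_contr_succ {p : L} (hp : p ≠ ⊥) (n : ℕ) (z) :
    F.d (n + 1) (F.contr p (n + 1) z) + F.contr p n (F.d n z) = z :=
  (F.exists_contractions.choose_spec p hp).2.2 n z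

/-- The vertical contraction. -/
def sv (j l : ℕ) : F.Dbl j l →ₗ[K] F.Dbl j (l + 1) :=
  TensorProduct.lift (linearCombination K fun x =>
    TensorProduct.mk K _ _ (single x 1) ∘ₗ F.contr (F.deg j x) l)

/-- The horizontal contraction. -/
def sh (j l : ℕ) : F.Dbl j l →ₗ[K] F.Dbl (j + 1) l :=
  TensorProduct.lift (linearCombination K fun y =>
    (TensorProduct.mk K _ _).flip (single y 1) ∘ₗ F.contr (F.deg l y) j).flip

lemma sv_tmul (j l : ℕ) (x b) :
    F.sv j l (single x 1 ⊗ₜ b) = single x 1 ⊗ₜ F.contr (F.deg j x) l b := by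
  simp [sv]

lemma sh_tmul (j l : ℕ) (a y) :
    F.sh j l (a ⊗ₜ single y 1) = F.contr (F.deg l y) j a ⊗ₜ single y 1 := by
  simp [sh]

lemma dv_sv_zero (j : ℕ) (u) : F.dv (j + 1) 0 (F.sv (j + 1) 0 u) = u := by
  have : F.dv (j + 1) 0 ∘ₗ F.sv (j + 1) 0 = LinearMap.id := by
    ext x y : 5
    change F.dv (j + 1) 0 (F.sv (j + 1) 0 (single x 1 ⊗ₜ single y 1)) = single x 1 ⊗ₜ single y 1
    rw [sv_tmul, dv_tmul, F.d_contr_zero (F.deg_ne j x)]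
  exact LinearMap.congr_fun this u

lemma dv_sv_succ (j l : ℕ) (u) :
    F.dv (j + 1) (l + 1) (F.sv (j + 1) (l + 1) u) + F.sv (j + 1) l (F.dv (j + 1) l u) = u := by
  have : F.dv (j + 1) (l + 1) ∘ₗ F.sv (j + 1) (l + 1) + F.sv (j + 1) l ∘ₗ F.dv (j + 1) l
      = LinearMap.id := by
    ext x y : 5
    change F.dv (j + 1) (l + 1) (F.sv (j + 1) (l + 1) (single x 1 ⊗ₜ single y 1))
      + F.sv (j + 1) l (F.dv (j + 1) l (single x 1 ⊗ₜ single y 1)) = single x 1 ⊗ₜ single y 1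
    rw [sv_tmul, dv_tmul, dv_tmul, sv_tmul, ← TensorProduct.tmul_add,
      F.d_contr_succ (F.deg_ne j x)]
  exact LinearMap.congr_fun this u

lemma dh_sh_succ (j l : ℕ) (u) :
    F.dh (j + 1) (l + 1) (F.sh (j + 1) (l + 1) u) + F.sh j (l + 1) (F.dh j (l + 1) u) = u := by
  have : F.dh (j + 1) (l + 1) ∘ₗ F.sh (j + 1) (l + 1) + F.sh j (l + 1) ∘ₗ F.dh j (l + 1)
      = LinearMap.id := by
    ext x y : 5
    change F.dh (j + 1) (l + 1) (F.sh (j + 1) (l + 1) (single x 1 ⊗ₜ single y 1))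
      + F.sh j (l + 1) (F.dh j (l + 1) (single x 1 ⊗ₜ single y 1)) = single x 1 ⊗ₜ single y 1
    rw [sh_tmul, dh_tmul, dh_tmul, sh_tmul, ← TensorProduct.add_tmul,
      F.d_contr_succ (F.deg_ne l y)]
  exact LinearMap.congr_fun this u

lemma sv_low {j l : ℕ} {u} (hu : u ∈ F.low (j + 1) l) :
    F.sv (j + 1) l u ∈ F.low (j + 1) (l + 1) := by
  refine map_mem_of_relSpan _ (fun x y h => ?_) hu
  rw [sv_tmul]
  refine F.tmul_mem_low ?_ (F.single_mem_le x) (F.contr_mem (F.deg_ne j x) l y)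
  rwa [sup_left_comm, sup_idem, sup_comm]

lemma sh_low {j l : ℕ} {u} (hu : u ∈ F.low j (l + 1)) :
    F.sh j (l + 1) u ∈ F.low (j + 1) (l + 1) := by
  refine map_mem_of_relSpan _ (fun x y h => ?_) hu
  rw [sh_tmul]
  refine F.tmul_mem_low ?_ (F.contr_mem (F.deg_ne l y) j x) (F.single_mem_le y)
  rwa [sup_assoc, sup_idem]

/-- The basis elements bounded by one of level `a`, if their level is at most `a`. -/
def Good (a j : ℕ) (x : F.ι j) : Prop := j ≤ a → ∃ i, F.deg j x ≤ F.deg a i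

/-- The part of the double complex spanned by good elements in the first factor. -/
def goodSpan (a j l : ℕ) : Submodule K (F.Dbl j l) := relSpan fun x _ => F.Good a j x

lemma dh_goodSpan {a j l : ℕ} {u} (hu : u ∈ F.goodSpan a (j + 1) l) :
    F.dh j l u ∈ F.goodSpan a j l := by
  refine map_mem_of_relSpan _ (fun x y h => ?_) hu
  refine tmul_mem_relSpan (r := fun x _ => F.Good a j x) (B := Set.univ)
    (fun x' hx' _ _ hj => ?_) (F.d_mem j x) (by simp)
  rcases hj.eq_or_lt with rfl | hj
  · exact ⟨x', le_rfl⟩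
  · obtain ⟨i, hi⟩ := h hj
    exact ⟨i, le_trans hx' hi⟩

lemma sv_goodSpan {a j l : ℕ} {u} (hu : u ∈ F.goodSpan a j l) :
    F.sv j l u ∈ F.goodSpan a j (l + 1) := by
  refine map_mem_of_relSpan _ (fun x y h => ?_) hu
  rw [sv_tmul]
  refine tmul_mem_relSpan (r := fun x _ => F.Good a j x) (A := {x}) (B := Set.univ)
    (fun x' hx' _ _ => ?_) (single_mem_supported K _ rfl) (by simp)
  rw [Set.mem_singleton_iff.1 hx']
  exact h

/-- Modulo the part of degree `≠ ⊤`, the element `u` is a horizontal cycle and a vertical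
boundary; nothing is required in column `0`. -/
def ClosedModLow : ∀ j l : ℕ, F.Dbl j l → Prop
  | 0, _, _ => True
  | j + 1, l, u => u - F.dv (j + 1) l (F.sv (j + 1) l u) ∈ F.low (j + 1) l ∧
      F.dh j l u ∈ F.low j l

/-- The zigzag step moving a nonzero class one column down and one row up. -/
lemma zigzag_step {j l : ℕ} {u : F.Dbl (j + 1) l}
    (hu : ∀ ξ, u - F.dh (j + 1) l (F.dv (j + 2) l ξ) ∉ F.low (j + 1) l)
    (hc : F.ClosedModLow (j + 1) l u) :
    (∀ ξ, F.dh j (l + 1) (F.sv (j + 1) l u) - F.dh j (l + 1) (F.dv (j + 1) (l + 1) ξ)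
        ∉ F.low j (l + 1)) ∧
      F.ClosedModLow j (l + 1) (F.dh j (l + 1) (F.sv (j + 1) l u)) := by
  obtain ⟨hv, hh⟩ := hc
  set w := F.sv (j + 1) l u with hw
  constructor
  · intro ξ hξ
    rw [← map_sub] at hξ
    have h1 := F.dv_low (F.sh_low hξ)
    rw [eq_sub_iff_add_eq'.2 (F.dh_sh_succ j l (w - F.dv (j + 1) (l + 1) ξ)), map_sub,
      map_sub, dv_dv, sub_zero, ← dh_dv] at h1
    refine hu (F.sh (j + 1) (l + 1) (w - F.dv (j + 1) (l + 1) ξ)) ?_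
    have h2 := Submodule.add_mem _ hv h1
    rwa [sub_add_sub_cancel] at h2
  · cases j with
    | zero => trivial
    | succ j =>
      refine ⟨?_, by rw [dh_dh]; exact Submodule.zero_mem _⟩
      have h1 : F.dv (j + 1) l (F.dh (j + 1) (l + 1) w) ∈ F.low (j + 1) l := by
        have h2 := Submodule.sub_mem _ hh (F.dh_low hv)
        rwa [map_sub, sub_sub_cancel, dh_dv] at h2
      rw [sub_eq_iff_eq_add'.2 (F.dv_sv_succ j l (F.dh (j + 1) (l + 1) w)).symm]
      exact F.sv_low h1

/-- If a minimal resolution has a generator of degree `⊤` in level `N`, with `a, b ≤ N ≤ a + b`,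
then it has generators in levels `a` and `b` whose degrees have join `⊤`. -/
lemma Minimal.exists_sup_eq_top {F : GradedRes K L} (hF : F.Minimal) {a b N : ℕ} (ha : a ≤ N)
    (hb : b ≤ N) (hN : N ≤ a + b) (i : F.ι N) (hi : F.deg N i = ⊤) :
    ∃ (x : F.ι a) (y : F.ι b), F.deg a x ⊔ F.deg b y = ⊤ := by
  have main : ∀ l j : ℕ, j + l = N → ∃ u : F.Dbl j l, u ∈ F.goodSpan a j l ∧
      (∀ ξ, u - F.dh j l (F.dv (j + 1) l ξ) ∉ F.low j l) ∧ F.ClosedModLow j l u := by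
    intro l
    induction l with
    | zero =>
      intro j hj
      obtain rfl : j = N := hj
      refine ⟨single i 1 ⊗ₜ single F.pt 1, ?_, fun ξ hξ => ?_, ?_⟩
      · refine Submodule.subset_span ⟨i, F.pt, fun hj => ?_, rfl⟩
        obtain rfl : j = a := le_antisymm hj ha
        exact ⟨i, le_rfl⟩
      · let Φ : F.Dbl j 0 →ₗ[K] K := TensorProduct.lift
          ((LinearMap.mul K K).compl₁₂ (lapply i) (lapply F.pt))
        have hΦ : ∀ a b, Φ (a ⊗ₜ b) = a i * b F.pt := fun a b => rfl
        have h1 : Φ (single i 1 ⊗ₜ single F.pt 1 - F.dh j 0 (F.dv (j + 1) 0 ξ))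
            ∈ (⊥ : Submodule K K) := by
          refine map_mem_of_relSpan Φ (fun x y h => ?_) hξ
          rw [Submodule.mem_bot, hΦ, single_eq_of_ne, zero_mul]
          rintro rfl
          exact h (by rw [hi, top_sup_eq])
        have h2 : Φ ∘ₗ F.dh j 0 = 0 := by
          ext x y : 5
          change Φ (F.dh j 0 (single x 1 ⊗ₜ single y 1)) = 0
          rw [dh_tmul, hΦ, (mem_supported' K _).1 (hF j x) i, zero_mul]
          simp [hi]
        rw [map_sub, ← LinearMap.comp_apply, h2, hΦ] at h1
        simp at h1
      · cases j with
        | zero => trivial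
        | succ j =>
          refine ⟨by rw [dv_sv_zero, sub_self]; exact Submodule.zero_mem _, ?_⟩
          have h3 := hF j i
          rw [hi] at h3
          refine tmul_mem_relSpan (r := fun x y => F.deg j x ⊔ F.deg 0 y ≠ ⊤) (B := Set.univ)
            (fun x hx y _ => ?_) h3 (by simp)
          rw [F.eq_pt y, F.deg_pt, sup_bot_eq]
          exact ne_of_lt hx
    | succ l ih =>
      intro j hj
      obtain ⟨u, h1, h2, h3⟩ := ih (j + 1) (by omega)
      exact ⟨_, F.dh_goodSpan (F.sv_goodSpan h1), F.zigzag_step h2 h3⟩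
  obtain ⟨u, h1, h2, -⟩ := main b (N - b) (by omega)
  by_contra! hne
  refine h2 0 ?_
  rw [map_zero, map_zero, sub_zero]
  refine map_mem_of_relSpan LinearMap.id (fun x y h => ?_) h1
  refine Submodule.subset_span ⟨x, y, fun hxy => ?_, rfl⟩
  obtain ⟨z, hz⟩ := h (by omega)
  exact hne z y (top_le_iff.1 (hxy.symm.le.trans (sup_le_sup_right hz _)))

end GradedRes

end DoubleComplex

end Resolution

/-- Let `L` be a finite lattice with `0̂ ≠ 1̂`, let `i₁, i₂ ≥ 1` and
`0 ≤ k ≤ min{i₁, i₂}`.  If `1̂` is an `(i₁+i₂-k-1)`-synor, then there are an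
`(i₁-1)`-synor `x` and an `(i₂-1)`-synor `y` with `x ⊔ y = 1̂`. -/
theorem synor_join_decomposition
    (L : Type) [Lattice L] [BoundedOrder L] [Fintype L] (hL : (⊥ : L) ≠ ⊤)
    (i₁ i₂ k : ℕ) (hi₁ : 1 ≤ i₁) (hi₂ : 1 ≤ i₂) (hk : k ≤ min i₁ i₂)
    (h : IsSynor K L (i₁ + i₂ - k - 1) (⊤ : L)) :
    ∃ x y : L, IsSynor K L (i₁ - 1) x ∧ IsSynor K L (i₂ - 1) y ∧ x ⊔ y = ⊤ := by
  obtain ⟨i, hi⟩ := (exists_minRes_deg_eq_iff (K := K) (⊤ : L) (i₁ + i₂ - k - 1)).2 h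
  obtain ⟨x, y, hxy⟩ := minRes_minimal.exists_sup_eq_top (a := i₁ - 1 + 1) (b := i₂ - 1 + 1)
    (by omega) (by omega) (by omega) i hi
  exact ⟨_, _, (exists_minRes_deg_eq_iff _ _).1 ⟨x, rfl⟩,
    (exists_minRes_deg_eq_iff _ _).1 ⟨y, rfl⟩, hxy⟩

end
end

section
/- Let I be a monomial ideal in S = K[x₁,…,xₙ], and let i₁, i₂ ≥ 1 and 0 ≤ k ≤ min{i₁, i₂} be integers. For any monomial m with β_{i₁+i₂−k, m}(S/I) ≠ 0 there exist monomials n₁, n₂ dividing m such that m = lcm(n₁, n₂), β_{i₁, n₁}(S/I) ≠ 0 and β_{i₂, n₂}(S/I) ≠ 0; in particular deg(n₁) ≤ t_{i₁}(S/I) and deg(n₂) ≤ t_{i₂}(S/I). -/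
open Finsupp

noncomputable section

variable (K : Type) [Field K]

section Monomial

variable (nv : ℕ)

/-- The polynomial ring `S = K[x₁, …, xₙ]`. -/
abbrev PolyS : Type := MvPolynomial (Fin nv) K

/-- The monomial `x^d` attached to an exponent vector `d`. -/
def monOf (d : Fin nv → ℕ) : PolyS K nv :=
  MvPolynomial.monomial (Finsupp.equivFunOnFinite.symm d) 1

/-- `I` is a monomial ideal: it is generated by monomials. -/
def IsMonomialIdeal (I : Ideal (PolyS K nv)) : Prop :=
  ∃ G : Set (Fin nv → ℕ), I = Ideal.span (monOf K nv '' G)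

/-- The minimal monomial generating set `G(I)` of a monomial ideal: exponent vectors of
the monomials of `I` that are minimal with respect to divisibility. -/
def minGens (I : Ideal (PolyS K nv)) : Set (Fin nv → ℕ) :=
  {d | monOf K nv d ∈ I ∧ ∀ d' < d, monOf K nv d' ∉ I}

/-- The underlying set of the LCM-lattice of a monomial ideal: all least common multiples
(= pointwise suprema of exponent vectors) of subsets of the minimal generators, ordered by
divisibility (= the pointwise order).  The empty subset contributes `lcm ∅ = 1`, i.e. the
zero exponent vector. -/
def lcmSet (I : Ideal (PolyS K nv)) : Set (Fin nv → ℕ) :=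
  {m | ∃ B : Finset (Fin nv → ℕ), ↑B ⊆ minGens K nv I ∧ m = B.sup id}

/-- The open interval `(1, m)` in the LCM-lattice of `I`. -/
def openInt (I : Ideal (PolyS K nv)) (m : Fin nv → ℕ) : Set (Fin nv → ℕ) :=
  {p | p ∈ lcmSet K nv I ∧ 0 < p ∧ p < m}

/-- Total degree of a monomial given by its exponent vector. -/
def degTot (m : Fin nv → ℕ) : ℕ := ∑ r, m r

open Classical in
/-- The multigraded Betti number `β_{i,m}(S/I) = dim_K Tor_i^S(S/I, K)_m` of a monomial
ideal, via the Gasharov–Peeva–Welker formula: for `i ≥ 1` and `m` in the LCM-lattice,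
`β_{i,m}(S/I) = dim_K H̃_{i-2}((1, m))` (reduced homology of the order complex of the open
interval in the LCM-lattice; degree `i-2` is level `i-1`; the dimension of the homology is
the dimension of the cycles minus the dimension of the boundaries); moreover `β_{0,m} = 1` iff
`m = 1`, and `β_{i,m} = 0` for `m` outside the LCM-lattice. -/
noncomputable def multiBetti (I : Ideal (PolyS K nv)) (i : ℕ) (m : Fin nv → ℕ) : ℕ :=
  if i = 0 then (if m = 0 then 1 else 0)
  else if m ∈ lcmSet K nv I ∧ m ≠ 0 then
    Module.finrank K ↥(cyclesAt K ↥(openInt K nv I m) (i - 1)) -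
      Module.finrank K ↥(boundariesIn K ↥(openInt K nv I m) (i - 1))
  else 0

/-- The graded Betti number `β_{i,j}(S/I) = dim_K Tor_i^S(S/I, K)_j`: the sum of the
multigraded Betti numbers over the multidegrees of total degree `j`. -/
noncomputable def betti (I : Ideal (PolyS K nv)) (i j : ℕ) : ℕ :=
  ∑ᶠ m ∈ {m : Fin nv → ℕ | degTot nv m = j}, multiBetti K nv I i m

/-- The maximal shift `t_i(S/I) = max { j : β_{i,j}(S/I) ≠ 0 }`, with `t_i(S/I) = 0`
if `β_{i,j}(S/I) = 0` for all `j` (the supremum over the empty set of naturals is `0`). -/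
noncomputable def tshift (I : Ideal (PolyS K nv)) (i : ℕ) : ℕ :=
  sSup {j | betti K nv I i j ≠ 0}

/-- `a_i(S/I)`: the number of multidegrees `m` with `β_{i,m}(S/I) ≠ 0`. -/
noncomputable def acount (I : Ideal (PolyS K nv)) (i : ℕ) : ℕ :=
  {m : Fin nv → ℕ | multiBetti K nv I i m ≠ 0}.ncard

end Monomial

section LabelledComplexes

variable {K : Type} [Field K] {L : Type}

/-- A complex of based `K`-vector spaces whose basis elements are labelled by elements of a
poset `L`, such that the differential does not increase labels. -/
structure LabelledComplex (K : Type) [Field K] (L : Type) [PartialOrder L] where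
  /-- the basis in each homological degree -/
  ι : ℕ → Type
  /-- the label of a basis element -/
  lab : ∀ {i}, ι i → L
  /-- the differential -/
  d : ∀ i, (ι (i + 1) →₀ K) →ₗ[K] (ι i →₀ K)
  d_d : ∀ i u, d i (d (i + 1) u) = 0
  lab_d : ∀ i (e : ι (i + 1)), d i (single e 1) ∈ supported K K {f | lab f ≤ lab e}

/-- A linear map out of a space of finitely supported functions maps `supported K K s` into a
submodule as soon as it does so for the basis vectors indexed by `s`. -/
theorem map_mem_of_mem_supported {α M : Type} [AddCommGroup M] [Module K M]
    (f : (α →₀ K) →ₗ[K] M) {s : Set α} {N : Submodule K M}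
    (h : ∀ a ∈ s, f (single a 1) ∈ N) {u : α →₀ K} (hu : u ∈ supported K K s) : f u ∈ N := by
  rw [supported_eq_span_single] at hu
  have : Submodule.span K ((fun i => single i (1 : K)) '' s) ≤ N.comap f := by
    rw [Submodule.span_le]
    rintro _ ⟨a, ha, rfl⟩
    exact h a ha
  exact this hu

namespace LabelledComplex

section PartialOrder

variable [PartialOrder L]

/-- The chains of degree `i` all of whose labels lie in `s`. -/
def on (F : LabelledComplex K L) (i : ℕ) (s : Set L) : Submodule K (F.ι i →₀ K) :=
  supported K K {e | F.lab e ∈ s}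

/-- The cycles; every chain of degree `0` is a cycle. -/
def cycles (F : LabelledComplex K L) : (i : ℕ) → Submodule K (F.ι i →₀ K)
  | 0 => ⊤
  | (i + 1) => LinearMap.ker (F.d i)

variable {F G : LabelledComplex K L}

theorem d_mem_cycles (i : ℕ) (u : F.ι (i + 1) →₀ K) : F.d i u ∈ F.cycles i := by
  cases i with
  | zero => trivial
  | succ i => exact F.d_d i u

theorem single_mem_on {i : ℕ} {e : F.ι i} {s : Set L} (h : F.lab e ∈ s) :
    single e (1 : K) ∈ F.on i s :=
  single_mem_supported K 1 h

theorem on_mono {i : ℕ} {s t : Set L} (h : s ⊆ t) : F.on i s ≤ F.on i t :=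
  supported_mono fun _ he => h he

theorem mem_on_iff {i : ℕ} {s : Set L} {u : F.ι i →₀ K} :
    u ∈ F.on i s ↔ ∀ e, u e ≠ 0 → F.lab e ∈ s := by
  rw [on, mem_supported']
  exact forall_congr' fun e => by rw [not_imp_comm]; rfl

/-- Extending by linearity maps that are bounded on labels. -/
theorem map_mem_on {i j : ℕ} {f : (F.ι i →₀ K) →ₗ[K] (G.ι j →₀ K)} {σ : L → L}
    (hf : ∀ e, f (single e 1) ∈ G.on j (Set.Iic (σ (F.lab e)))) {s t : Set L}
    (hst : ∀ x ∈ s, Set.Iic (σ x) ⊆ t) {u : F.ι i →₀ K} (hu : u ∈ F.on i s) :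
    f u ∈ G.on j t :=
  map_mem_of_mem_supported f (fun e he => on_mono (hst _ he) (hf e)) hu

theorem d_mem_on {i : ℕ} {s : Set L} (hs : IsLowerSet s) {u : F.ι (i + 1) →₀ K}
    (hu : u ∈ F.on (i + 1) s) : F.d i u ∈ F.on i s :=
  map_mem_on (σ := id) (F.lab_d i) (fun _ hx _ hy => hs hy hx) hu

/-- A basis element of degree `q` can be enlarged to degree `b` if `b ≤ q` or its label lies
below the label of some basis element of degree `b`. -/
def Extends (F : LabelledComplex K L) (b : ℕ) {q : ℕ} (f : F.ι q) : Prop :=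
  q < b → ∃ g : F.ι b, F.lab f ≤ F.lab g

theorem Extends.d_mem {b q : ℕ} {f : F.ι (q + 1)} (hf : F.Extends b f) :
    F.d q (single f 1) ∈ supported K K {g : F.ι q | F.Extends b g} := by
  refine supported_mono (fun g hg hq => ?_) (F.lab_d q f)
  rcases Nat.lt_or_ge (q + 1) b with h | h
  · obtain ⟨g', hg'⟩ := hf h
    exact ⟨g', le_trans hg hg'⟩
  · obtain rfl : b = q + 1 := by omega
    exact ⟨f, hg⟩

variable [OrderBot L]

/-- A labelled complex is a resolution when it starts with one basis element, labelled `⊥`,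
has no other label `⊥`, and its part with labels `≤ x` is exact for all `x ≠ ⊥`. -/
structure IsResolution (F : LabelledComplex K L) : Prop where
  existsUnique_zero : ∃ e : F.ι 0, ∀ e', e' = e
  lab_zero : ∀ e : F.ι 0, F.lab e = ⊥
  lab_succ : ∀ i (e : F.ι (i + 1)), F.lab e ≠ ⊥
  exact : ∀ x ≠ ⊥, ∀ i, ∀ u ∈ F.on i (Set.Iic x), u ∈ F.cycles i →
    ∃ v ∈ F.on (i + 1) (Set.Iic x), F.d i v = u

/-- A label-bounded chain map into a resolution is null on cycles, by label-bounded
partial homotopies. -/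
theorem exists_homotopy (hF : ∀ i (e : F.ι (i + 1)), F.lab e ≠ ⊥) (hG : G.IsResolution)
    (T : ∀ i, (F.ι i →₀ K) →ₗ[K] (G.ι i →₀ K))
    (hT : ∀ i u, G.d i (T (i + 1) u) = T i (F.d i u)) (σ : L → L) (hσ : Monotone σ)
    (hσ' : ∀ x, x ≤ σ x)
    (hTσ : ∀ i e, T i (single e 1) ∈ G.on i (Set.Iic (σ (F.lab e))))
    (h0 : ∀ e, ∃ v ∈ G.on 1 (Set.Iic (σ (F.lab e))), G.d 0 v = T 0 (single e 1)) (i : ℕ) :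
    ∃ h : (F.ι i →₀ K) →ₗ[K] (G.ι (i + 1) →₀ K),
      (∀ e, h (single e 1) ∈ G.on (i + 1) (Set.Iic (σ (F.lab e)))) ∧
      ∀ w ∈ F.cycles i, G.d i (h w) = T i w := by
  induction i with
  | zero =>
    choose v hv hdv using h0
    refine ⟨linearCombination K v, fun e => by simpa using hv e, fun w _ => ?_⟩
    have : G.d 0 ∘ₗ linearCombination K v = T 0 := by
      ext1 e
      ext1
      simpa using hdv e
    exact LinearMap.congr_fun this w
  | succ i ih =>
    obtain ⟨h, hh, hd⟩ := ih
    have key : ∀ e, ∃ v ∈ G.on (i + 2) (Set.Iic (σ (F.lab e))),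
        G.d (i + 1) v = T (i + 1) (single e 1) - h (F.d i (single e 1)) := by
      intro e
      have hne : σ (F.lab e) ≠ ⊥ := fun h' =>
        hF i e (le_bot_iff.mp ((hσ' _).trans h'.le))
      apply hG.exact _ hne
      · refine sub_mem (hTσ _ e) ?_
        exact map_mem_on hh (fun x hx => Set.Iic_subset_Iic.mpr (hσ hx)) (F.lab_d i e)
      · change G.d i _ = 0
        rw [map_sub, hT, hd _ (d_mem_cycles _ _), sub_self]
    choose v hv hdv using key
    refine ⟨linearCombination K v, fun e => by simpa using hv e, fun w hw => ?_⟩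
    have : G.d (i + 1) ∘ₗ linearCombination K v = T (i + 1) - h ∘ₗ F.d i := by
      ext1 e
      ext1
      simpa using hdv e
    have := LinearMap.congr_fun this w
    simp only [LinearMap.comp_apply, LinearMap.sub_apply] at this
    rw [this, show F.d i w = 0 from hw, map_zero, sub_zero]

/-- Comparison of resolutions: a label-preserving chain map. -/
theorem exists_chainMap (hF : F.IsResolution) (hG : G.IsResolution) :
    ∃ f : ∀ i, (F.ι i →₀ K) →ₗ[K] (G.ι i →₀ K),
      (∀ i u, G.d i (f (i + 1) u) = f i (F.d i u)) ∧
      (∀ i e, f i (single e 1) ∈ G.on i (Set.Iic (F.lab e))) ∧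
      ∀ e e', f 0 (single e 1) = single e' 1 := by
  obtain ⟨g₀, hg₀⟩ := hG.existsUnique_zero
  let X : ℕ → Type := fun i => {f : (F.ι i →₀ K) →ₗ[K] (G.ι i →₀ K) //
    (∀ e, f (single e 1) ∈ G.on i (Set.Iic (F.lab e))) ∧
    ∀ w ∈ F.cycles i, f w ∈ G.cycles i}
  have step : ∀ i (f : X i), ∃ f' : X (i + 1), ∀ u, G.d i (f'.1 u) = f.1 (F.d i u) := by
    rintro i ⟨f, hf, hc⟩
    have key : ∀ e, ∃ v ∈ G.on (i + 1) (Set.Iic (F.lab e)),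
        G.d i v = f (F.d i (single e 1)) := fun e =>
      hG.exact _ (hF.lab_succ i e) i _
        (map_mem_on (σ := id) hf (fun x hx => Set.Iic_subset_Iic.mpr hx) (F.lab_d i e))
        (hc _ (d_mem_cycles _ _))
    choose v hv hdv using key
    have hcomm : ∀ u, G.d i (linearCombination K v u) = f (F.d i u) := by
      have : G.d i ∘ₗ linearCombination K v = f ∘ₗ F.d i := by
        ext1 e
        ext1
        simpa using hdv e
      exact LinearMap.congr_fun this
    refine ⟨⟨linearCombination K v, fun e => by simpa using hv e, fun w hw => ?_⟩, hcomm⟩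
    change G.d i _ = 0
    rw [hcomm, show F.d i w = 0 from hw, map_zero]
  choose next hnext using step
  have h0 : ∀ e, linearCombination K (fun _ : F.ι 0 => single g₀ (1 : K)) (single e 1) =
      single g₀ 1 := fun e => by simp
  let f₀ : X 0 := ⟨linearCombination K fun _ => single g₀ 1, fun e => by
    rw [h0]
    exact single_mem_on (by simp [hG.lab_zero]), fun _ _ => trivial⟩
  let f : ∀ i, X i := fun i => Nat.rec f₀ next i
  refine ⟨fun i => (f i).1, fun i u => hnext i (f i) u, fun i => (f i).2.1, fun e e' => ?_⟩
  rw [hg₀ e']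
  exact h0 e

/-- The subcomplex of labels `< x` has nonzero homology in degree `i`. -/
def HomologyBelow (F : LabelledComplex K L) (i : ℕ) (x : L) : Prop :=
  ∃ z ∈ F.on i (Set.Iio x), z ∈ F.cycles i ∧ ∀ v ∈ F.on (i + 1) (Set.Iio x), F.d i v ≠ z

/-- The homology of the part with labels `< x` does not depend on the resolution. -/
theorem HomologyBelow.of_isResolution (hF : F.IsResolution) (hG : G.IsResolution) {i : ℕ}
    {x : L} (h : F.HomologyBelow i x) : G.HomologyBelow i x := by
  obtain ⟨z, hz, hzc, hzb⟩ := h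
  obtain ⟨f, hf, hfl, hf0⟩ := exists_chainMap hF hG
  obtain ⟨g, hg, hgl, hg0⟩ := exists_chainMap hG hF
  have hIio : ∀ y ∈ Set.Iio x, Set.Iic (id y) ⊆ Set.Iio x := fun y hy w hw =>
    lt_of_le_of_lt hw hy
  obtain ⟨e₀, -⟩ := hG.existsUnique_zero
  obtain ⟨h, hhl, hh⟩ := exists_homotopy hF.lab_succ hF
    (fun i => g i ∘ₗ f i - LinearMap.id) (fun i u => by simp [hf, hg]) id monotone_id
    (fun _ => le_rfl)
    (fun i e => sub_mem
      (map_mem_on (σ := id) (hgl i) (fun y hy => Set.Iic_subset_Iic.mpr hy) (hfl i e))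
      (single_mem_on (by simp)))
    (fun e => ⟨0, zero_mem _, by simp [hf0 e e₀, hg0 e₀ e]⟩) i
  have hfc : f i z ∈ G.cycles i := by
    cases i with
    | zero => trivial
    | succ i =>
      change G.d i _ = 0
      rw [hf, show F.d i z = 0 from hzc, map_zero]
  refine ⟨f i z, map_mem_on (σ := id) (hfl i) hIio hz, hfc, fun v hv hdv => ?_⟩
  refine hzb (g (i + 1) v - h z) (sub_mem (map_mem_on (σ := id) (hgl _) hIio hv)
    (map_mem_on (σ := id) hhl hIio hz)) ?_
  rw [map_sub, hg, hdv, hh z hzc]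
  simp

/-- Minimality: the differential strictly decreases labels. -/
def IsMinimal (F : LabelledComplex K L) : Prop :=
  ∀ i (e : F.ι (i + 1)), F.d i (single e 1) ∈ F.on i (Set.Iio (F.lab e))

/-- In a minimal resolution, basis elements of label `x` correspond to homology of the part
with labels `< x`. -/
theorem IsMinimal.exists_lab_eq_iff (hm : F.IsMinimal) (hF : F.IsResolution) {i : ℕ} {x : L}
    (hx : x ≠ ⊥) : (∃ e : F.ι (i + 1), F.lab e = x) ↔ F.HomologyBelow i x := by
  constructor
  · rintro ⟨e, rfl⟩
    refine ⟨_, hm i e, d_mem_cycles _ _, fun v hv hdv => ?_⟩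
    obtain ⟨w, hw, hdw⟩ := hF.exact _ hx (i + 1) (single e 1 - v)
      (sub_mem (single_mem_on (by simp)) (on_mono Set.Iio_subset_Iic_self hv))
      (show F.d i _ = 0 by rw [map_sub, hdv, sub_self])
    have hlt : F.d (i + 1) w ∈ F.on (i + 1) (Set.Iio (F.lab e)) :=
      map_mem_of_mem_supported _
        (fun g hg => on_mono (Set.Iio_subset_Iio hg) (hm (i + 1) g)) hw
    have he : single e (1 : K) ∈ F.on (i + 1) (Set.Iio (F.lab e)) := by
      rw [hdw] at hlt
      simpa using add_mem hlt hv
    exact lt_irrefl _ (mem_on_iff.mp he e (by simp))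
  · rintro ⟨z, hz, hzc, hzb⟩
    by_contra! hne
    obtain ⟨v, hv, hdv⟩ := hF.exact x hx i z (on_mono Set.Iio_subset_Iic_self hz) hzc
    refine hzb v (mem_on_iff.mpr fun e he => ?_) hdv
    exact lt_of_le_of_ne (mem_on_iff.mp hv e he) (hne e)

end PartialOrder

section Bicomplex

variable [SemilatticeSup L] [BoundedOrder L] {F G : LabelledComplex K L}

/-- Bilinear forms on chains that are supported on the pairs of basis elements whose labels
have join `⊤`. -/
def IsTopForm {p q : ℕ} (φ : (F.ι p →₀ K) →ₗ[K] (G.ι q →₀ K) →ₗ[K] K) : Prop :=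
  ∀ e f, φ (single e 1) (single f 1) ≠ 0 → F.lab e ⊔ G.lab f = ⊤

theorem IsTopForm.flip {p q : ℕ} {φ : (F.ι p →₀ K) →ₗ[K] (G.ι q →₀ K) →ₗ[K] K}
    (hφ : IsTopForm φ) : IsTopForm φ.flip := fun f e h => by
  rw [sup_comm]
  exact hφ e f h

theorem IsTopForm.sub {p q : ℕ} {φ ψ : (F.ι p →₀ K) →ₗ[K] (G.ι q →₀ K) →ₗ[K] K}
    (hφ : IsTopForm φ) (hψ : IsTopForm ψ) : IsTopForm (φ - ψ) := fun e f h => by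
  by_contra hne
  apply h
  have h₁ := not_imp_comm.mp (hφ e f) hne
  have h₂ := not_imp_comm.mp (hψ e f) hne
  simp [h₁, h₂]

theorem IsTopForm.apply_eq_zero {p q : ℕ} {φ : (F.ι p →₀ K) →ₗ[K] (G.ι q →₀ K) →ₗ[K] K}
    (hφ : IsTopForm φ) {f : G.ι q} {u : F.ι p →₀ K}
    (hu : u ∈ F.on p {x | x ⊔ G.lab f ≠ ⊤}) : φ u (single f 1) = 0 := by
  have := map_mem_of_mem_supported (N := ⊥) (φ.flip (single f 1))
    (s := {e | F.lab e ∈ {x | x ⊔ G.lab f ≠ ⊤}})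
    (fun e he => by
      by_contra h
      exact he (hφ e f h)) hu
  simpa using this

theorem isLowerSet_sup_ne_top (y : L) : IsLowerSet {x : L | x ⊔ y ≠ ⊤} := fun _ _ hba ha hb =>
  ha (top_le_iff.mp (hb ▸ sup_le_sup_right hba y))

theorem IsTopForm.comp_d {p q : ℕ} {φ : (F.ι p →₀ K) →ₗ[K] (G.ι q →₀ K) →ₗ[K] K}
    (hφ : IsTopForm φ) : IsTopForm (φ ∘ₗ F.d p) := fun e f h => by
  by_contra hne
  exact h (hφ.apply_eq_zero (d_mem_on (isLowerSet_sup_ne_top _) (single_mem_on hne)))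

theorem IsTopForm.compl₂_d {p q : ℕ} {φ : (F.ι p →₀ K) →ₗ[K] (G.ι q →₀ K) →ₗ[K] K}
    (hφ : IsTopForm φ) : IsTopForm (φ.compl₂ (G.d q)) :=
  hφ.flip.comp_d.flip

/-- The part of a resolution with labels `≤ x ⊔ n` contracts the part with labels `≤ x`. -/
theorem IsResolution.exists_contraction (hF : F.IsResolution) {n : L} (hn : n ≠ ⊥) (p : ℕ) :
    ∃ h : (F.ι p →₀ K) →ₗ[K] (F.ι (p + 1) →₀ K),
      (∀ e, h (single e 1) ∈ F.on (p + 1) (Set.Iic (F.lab e ⊔ n))) ∧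
      ∀ w ∈ F.cycles p, F.d p (h w) = w := by
  have := exists_homotopy hF.lab_succ hF (fun _ => LinearMap.id) (fun _ _ => rfl) (· ⊔ n)
    (fun _ _ h => sup_le_sup_right h n) (fun _ => le_sup_left)
    (fun i e => single_mem_on le_sup_left)
    (fun e => hF.exact _ (fun h => hn (le_bot_iff.mp (h ▸ le_sup_right))) 0 _
      (single_mem_on le_sup_left) trivial) p
  simpa using this

variable [Nontrivial L]

/-- Exactness of the complex of top forms in the first variable. -/
theorem IsTopForm.exists_comp_d_eq (hF : F.IsResolution) {p q : ℕ}
    (hG : ∀ f : G.ι q, G.lab f ≠ ⊥)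
    {φ : (F.ι (p + 1) →₀ K) →ₗ[K] (G.ι q →₀ K) →ₗ[K] K} (hφ : IsTopForm φ)
    (hd : φ ∘ₗ F.d (p + 1) = 0) :
    ∃ ψ : (F.ι p →₀ K) →ₗ[K] (G.ι q →₀ K) →ₗ[K] K, IsTopForm ψ ∧ ψ ∘ₗ F.d p = φ ∧
      ∀ f, (∀ u, φ u (single f 1) = 0) → ∀ u, ψ u (single f 1) = 0 := by
  choose h hh hw using fun f : G.ι q => hF.exists_contraction (hG f) p
  let ψ : (F.ι p →₀ K) →ₗ[K] (G.ι q →₀ K) →ₗ[K] K :=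
    (lsum K fun f => LinearMap.toSpanSingleton K _ (φ.flip (single f 1) ∘ₗ h f)).flip
  have hψ : ∀ u f, ψ u (single f 1) = φ (h f u) (single f 1) := fun u f => by simp [ψ]
  refine ⟨ψ, fun e f hne => ?_, ?_, fun f hf u => by rw [hψ, hf]⟩
  · by_contra htop
    refine hne ((hψ _ _).trans (hφ.apply_eq_zero (on_mono (fun y hy => ?_) (hh f e))))
    refine isLowerSet_sup_ne_top _ hy ?_
    simpa [sup_assoc] using htop
  · ext e f
    change ψ (F.d p (single e 1)) (single f 1) = φ (single e 1) (single f 1)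
    rw [hψ]
    obtain ⟨w, -, hdw⟩ := hF.exact ⊤ top_ne_bot (p + 1)
      (h f (F.d p (single e 1)) - single e 1) (mem_on_iff.mpr fun _ _ => le_top)
      (show F.d p _ = 0 by rw [map_sub, hw f _ (d_mem_cycles _ _), sub_self])
    have := LinearMap.congr_fun (LinearMap.congr_fun hd w) (single f 1)
    rw [LinearMap.comp_apply, hdw, map_sub, LinearMap.sub_apply, LinearMap.zero_apply,
      LinearMap.zero_apply] at this
    exact sub_eq_zero.mp this

/-- Injectivity at the start of the complex of top forms in the first variable. -/
theorem IsResolution.eq_zero_of_comp_d_eq_zero (hF : F.IsResolution) {q : ℕ}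
    {φ : (F.ι 0 →₀ K) →ₗ[K] (G.ι q →₀ K) →ₗ[K] K} (hd : φ ∘ₗ F.d 0 = 0) : φ = 0 := by
  ext1 e
  ext1
  obtain ⟨w, -, hdw⟩ := hF.exact ⊤ top_ne_bot 0 (single e 1)
    (mem_on_iff.mpr fun _ _ => le_top) trivial
  change φ (single e 1) = 0
  rw [← hdw]
  exact LinearMap.congr_fun hd w

/-- One step along the antidiagonal of degree `j` in the double complex of top forms. -/
theorem IsTopForm.exists_antidiagonal_step (hF : F.IsResolution) {a b p q : ℕ}
    (hjab : p + 1 + q ≤ a + b)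
    (hpair : ∀ (e : F.ι a) (g : F.ι b), F.lab e ⊔ F.lab g ≠ ⊤)
    {φ : (F.ι (p + 1) →₀ K) →ₗ[K] (F.ι q →₀ K) →ₗ[K] K} (hφ : IsTopForm φ)
    (hd : φ.compl₂ (F.d q) ∘ₗ F.d (p + 1) = 0)
    (hbad : p + 1 < a → ∀ f, F.Extends b f → ∀ u, φ u (single f 1) = 0) :
    ∃ ψ : (F.ι p →₀ K) →ₗ[K] (F.ι (q + 1) →₀ K) →ₗ[K] K, IsTopForm ψ ∧
      ψ ∘ₗ F.d p = φ.compl₂ (F.d q) ∧ ψ.compl₂ (F.d (q + 1)) ∘ₗ F.d p = 0 ∧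
      (p < a → ∀ f, F.Extends b f → ∀ u, ψ u (single f 1) = 0) := by
  obtain ⟨ψ, hψ, hψd, hψf⟩ := hφ.compl₂_d.exists_comp_d_eq hF (hF.lab_succ q) hd
  refine ⟨ψ, hψ, hψd, ?_, fun hpa f hf => hψf f fun u => ?_⟩
  · ext1 e
    ext1
    ext1 f
    ext1
    have := LinearMap.congr_fun (LinearMap.congr_fun hψd (single e 1))
      (F.d (q + 1) (single f 1))
    simpa [F.d_d] using this
  · have hvan : ∀ f, F.Extends b f → φ u (single f 1) = 0 := by
      intro f hf
      rcases Nat.lt_or_eq_of_le (Nat.succ_le_of_lt hpa) with h | rfl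
      · exact hbad h f hf u
      · refine hφ.apply_eq_zero (mem_on_iff.mpr fun e _ htop => ?_)
        rcases Nat.lt_or_eq_of_le (show q ≤ b by omega) with h | rfl
        · obtain ⟨g, hg⟩ := hf h
          exact hpair e g (top_le_iff.mp (htop ▸ sup_le_sup_left hg _))
        · exact hpair e f htop
    have := map_mem_of_mem_supported (N := ⊥) (φ u) (fun f hf => hvan f hf) hf.d_mem
    simpa using this

/-- The descent along the antidiagonal of degree `j` in the double complex of top forms. -/
theorem IsTopForm.exists_comp_d_eq_compl₂_d_comp_d (hF : F.IsResolution) {a b j : ℕ}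
    (ha : 1 ≤ a) (hbj : b ≤ j) (hjab : j ≤ a + b)
    (hpair : ∀ (e : F.ι a) (g : F.ι b), F.lab e ⊔ F.lab g ≠ ⊤) {p q : ℕ}
    {φ : (F.ι p →₀ K) →ₗ[K] (F.ι (q + 1) →₀ K) →ₗ[K] K} (hj : p + (q + 1) = j)
    (hφ : IsTopForm φ) (hd : φ.compl₂ (F.d (q + 1)) ∘ₗ F.d p = 0)
    (hbad : p < a → ∀ f, F.Extends b f → ∀ u, φ u (single f 1) = 0) :
    ∃ ω : (F.ι p →₀ K) →ₗ[K] (F.ι q →₀ K) →ₗ[K] K, IsTopForm ω ∧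
      φ ∘ₗ F.d p = ω.compl₂ (F.d q) ∘ₗ F.d p := by
  induction p generalizing q with
  | zero =>
    refine ⟨0, fun e f h => absurd rfl h, ?_⟩
    have : φ = 0 := by
      ext1 e
      ext1
      ext1 f
      ext1
      exact hbad ha f (fun h => by omega) _
    rw [this]
    rfl
  | succ p ih =>
    obtain ⟨ψ, hψ, hψd, hψ2, hψf⟩ :=
      hφ.exists_antidiagonal_step hF (by omega) hpair hd hbad
    obtain ⟨ω, hω, hωd⟩ := ih (by omega) hψ hψ2 hψf
    have hz : (φ - ω ∘ₗ F.d p).flip ∘ₗ F.d (q + 1) = 0 := by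
      rw [hψd] at hωd
      ext1 f
      ext1
      ext1 e
      ext1
      have := LinearMap.congr_fun (LinearMap.congr_fun hωd (single e 1)) (single f 1)
      simpa [sub_eq_zero] using this
    obtain ⟨χ, hχ, hχd, -⟩ :=
      (hφ.sub hω.comp_d).flip.exists_comp_d_eq hF (hF.lab_succ p) hz
    refine ⟨χ.flip, hχ.flip, ?_⟩
    ext1 e
    ext1
    ext1 f
    ext1
    have := LinearMap.congr_fun (LinearMap.congr_fun hχd (single f 1))
      (F.d (p + 1) (single e 1))
    simpa [F.d_d] using this.symm

/-- In a minimal resolution, a basis element of degree `j` with label `⊤` forces basis elements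
of degrees `a` and `b` whose labels have join `⊤`, whenever `a, b ≤ j ≤ a + b`. -/
theorem IsMinimal.exists_sup_eq_top (hm : F.IsMinimal) (hF : F.IsResolution) {a b j : ℕ}
    (ha : 1 ≤ a) (haj : a ≤ j) (hbj : b ≤ j) (hjab : j ≤ a + b) {e₀ : F.ι j}
    (he₀ : F.lab e₀ = ⊤) : ∃ (e : F.ι a) (g : F.ι b), F.lab e ⊔ F.lab g = ⊤ := by
  by_contra! hpair
  obtain ⟨j, rfl⟩ : ∃ i, j = i + 1 := ⟨j - 1, by omega⟩
  let φ : (F.ι (j + 1) →₀ K) →ₗ[K] (F.ι 0 →₀ K) →ₗ[K] K :=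
    (lapply e₀).smulRight (linearCombination K fun _ => (1 : K))
  have hφ : ∀ u f, φ u (single f 1) = u e₀ := fun u f => by simp [φ]
  have hφtop : IsTopForm φ := fun e f h => by
    rw [hφ] at h
    obtain rfl : e = e₀ := by
      by_contra hne
      exact h (single_eq_of_ne' hne)
    rw [he₀, top_sup_eq]
  have hcoef : ∀ i (e : F.ι (i + 1)) f, F.lab f = ⊤ → F.d i (single e 1) f = 0 :=
    fun i e f hf => by
      by_contra h
      exact not_top_lt (hf ▸ lt_of_lt_of_le (mem_on_iff.mp (hm i e) f h) le_top)
  obtain ⟨ψ, hψ, hψd, hψ2, hψf⟩ :=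
    hφtop.exists_antidiagonal_step (b := b) (a := a) hF (by omega) hpair (by
      have : φ ∘ₗ F.d (j + 1) = 0 := by
        ext1 e
        ext1
        ext1 f
        ext1
        exact (hφ _ _).trans (hcoef _ _ _ he₀)
      ext1 e
      ext1
      ext1 f
      ext1
      exact LinearMap.congr_fun (LinearMap.congr_fun this (single e 1)) _)
      (fun h => by omega)
  obtain ⟨ω, hω, hωd⟩ :=
    hψ.exists_comp_d_eq_compl₂_d_comp_d hF ha hbj hjab hpair (by omega) hψ2 hψf
  have hz : φ - ω ∘ₗ F.d j = 0 := by
    have : (φ - ω ∘ₗ F.d j).flip ∘ₗ F.d 0 = 0 := by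
      rw [hψd] at hωd
      ext1 f
      ext1
      ext1 e
      ext1
      have := LinearMap.congr_fun (LinearMap.congr_fun hωd (single e 1)) (single f 1)
      simpa [sub_eq_zero] using this
    rw [← LinearMap.flip_flip (φ - ω ∘ₗ F.d j), hF.eq_zero_of_comp_d_eq_zero this]
    rfl
  obtain ⟨f, -⟩ := hF.existsUnique_zero
  have h₁ := LinearMap.congr_fun (LinearMap.congr_fun hz (single e₀ 1)) (single f 1)
  rw [LinearMap.sub_apply, LinearMap.sub_apply, hφ, LinearMap.comp_apply,
    hω.apply_eq_zero (mem_on_iff.mpr fun e he htop => he (hcoef _ _ _ ?_))] at h₁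
  · simp at h₁
  · simpa [hF.lab_zero] using htop

end Bicomplex

section MinimalResolution

/-- A step in the construction of a minimal resolution: a labelled basis together with the
cycles among its chains. -/
structure Stage (K : Type) [Field K] (L : Type) where
  /-- the basis -/
  ι : Type
  /-- the labels -/
  lab : ι → L
  /-- the cycles -/
  Z : Submodule K (ι →₀ K)

variable [PartialOrder L]

/-- Cycles with labels `≤ x`. -/
def Stage.cyc (s : Stage K L) (x : L) : Submodule K (s.ι →₀ K) :=
  s.Z ⊓ supported K K {e | s.lab e ≤ x}

/-- A submodule has minimal generators modulo another one. -/
theorem exists_generators_mod {M : Type} [AddCommGroup M] [Module K M] (W A : Submodule K M) :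
    ∃ (T : Type) (r : T → M), (∀ t, r t ∈ W) ∧ W ≤ Submodule.span K (Set.range r) ⊔ A ∧
      LinearIndependent K fun t => A.mkQ (r t) := by
  let B := Module.Basis.ofVectorSpace K (W.map A.mkQ)
  have hr : ∀ t, ∃ w ∈ W, A.mkQ w = B t := fun t => (B t).2
  choose r hrW hr using hr
  refine ⟨_, r, hrW, fun w hw => ?_, ?_⟩
  · have hspan : W.map A.mkQ ≤ (Submodule.span K (Set.range r)).map A.mkQ := by
      rw [Submodule.map_span, ← Set.range_comp]
      have h₁ : (A.mkQ ∘ r) = (W.map A.mkQ).subtype ∘ B := funext hr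
      rw [h₁, Set.range_comp, ← Submodule.map_span, B.span_eq, Submodule.map_subtype_top]
    obtain ⟨v, hv, hvw⟩ := hspan (Submodule.mem_map_of_mem hw)
    have : w - v ∈ A := by
      rw [← Submodule.ker_mkQ A, LinearMap.mem_ker, map_sub, hvw, sub_self]
    rw [← add_sub_cancel v w]
    exact Submodule.add_mem_sup hv this
  · rw [show (fun t => A.mkQ (r t)) = (W.map A.mkQ).subtype ∘ B from funext hr]
    exact B.linearIndependent.map' _ (Submodule.ker_subtype _)

variable [OrderBot L]

/-- Minimal generators of the cycles of a stage. -/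
theorem Stage.exists_next [WellFoundedLT L] (s : Stage K L) :
    ∃ (ι : Type) (lab : ι → L) (d : (ι →₀ K) →ₗ[K] (s.ι →₀ K)),
      (∀ e, lab e ≠ ⊥) ∧ (∀ e, d (single e 1) ∈ s.cyc (lab e)) ∧
      (∀ x ≠ ⊥, ∀ u ∈ s.cyc x, ∃ v ∈ supported K K {e | lab e ≤ x}, d v = u) ∧
      ∀ x, ∀ u ∈ supported K K {e | lab e = x},
        d u ∈ (⨆ y, ⨆ (_ : y ≠ ⊥), ⨆ (_ : y < x), s.cyc y) → u = 0 := by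
  choose T r hr hgen hind using fun x =>
    exists_generators_mod (s.cyc x) (⨆ y, ⨆ (_ : y ≠ ⊥), ⨆ (_ : y < x), s.cyc y)
  let d : ((Σ x : {x : L // x ≠ ⊥}, T x.1) →₀ K) →ₗ[K] (s.ι →₀ K) :=
    linearCombination K fun e => r e.1.1 e.2
  have hd : ∀ e, d (single e 1) = r e.1.1 e.2 := fun e => by simp [d]
  refine ⟨_, fun e => e.1.1, d, fun e => e.1.2, fun e => hd e ▸ hr _ _, ?_, ?_⟩
  · intro x
    induction x using WellFoundedLT.induction with
    | ind x ih =>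
    intro hx u hu
    have hle : s.cyc x ≤ (supported K K {e : Σ x : {x : L // x ≠ ⊥}, T x.1 | e.1.1 ≤ x}).map d := by
      refine (hgen x).trans (sup_le ?_ ?_)
      · rw [Submodule.span_le]
        rintro _ ⟨t, rfl⟩
        exact ⟨single ⟨⟨x, hx⟩, t⟩ 1, single_mem_supported K 1 le_rfl, hd _⟩
      · refine iSup_le fun y => iSup_le fun hy => iSup_le fun hyx w hw => ?_
        obtain ⟨v, hv, hdv⟩ := ih y hyx hy w hw
        exact ⟨v, supported_mono (fun e he => le_trans he hyx.le) hv, hdv⟩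
    exact hle hu
  · intro x u hu hdu
    by_cases hx : x = ⊥
    · have : {e : Σ x : {x : L // x ≠ ⊥}, T x.1 | e.1.1 = x} = ∅ := by
        ext e
        simpa [hx] using e.1.2
      rw [this, supported_empty] at hu
      exact hu
    · have hu' : u ∈ (⊤ : Submodule K (T x →₀ K)).map
          (lmapDomain K K fun t => (⟨⟨x, hx⟩, t⟩ : Σ x : {x : L // x ≠ ⊥}, T x.1)) := by
        rw [← supported_univ, lmapDomain_supported]
        refine supported_mono (fun e he => ?_) hu
        obtain ⟨⟨y, hy⟩, t⟩ := e
        obtain rfl : y = x := he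
        exact ⟨t, trivial, rfl⟩
      obtain ⟨v, -, rfl⟩ := hu'
      have hv : linearCombination K (fun t => Submodule.mkQ
          (⨆ y, ⨆ (_ : y ≠ ⊥), ⨆ (_ : y < x), s.cyc y) (r x t)) v = 0 := by
        rw [← Submodule.ker_mkQ (⨆ y, ⨆ (_ : y ≠ ⊥), ⨆ (_ : y < x), s.cyc y),
          LinearMap.mem_ker] at hdu
        rw [← hdu, lmapDomain_apply, linearCombination_mapDomain, apply_linearCombination]
        rfl
      rw [(linearIndependent_iff.mp (hind x)) v hv, map_zero]

variable [WellFoundedLT L]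

/-- The next stage of the minimal resolution. -/
def Stage.next (s : Stage K L) : Stage K L where
  ι := s.exists_next.choose
  lab := s.exists_next.choose_spec.choose
  Z := LinearMap.ker s.exists_next.choose_spec.choose_spec.choose

/-- The differential from the next stage. -/
def Stage.d (s : Stage K L) : (s.next.ι →₀ K) →ₗ[K] (s.ι →₀ K) :=
  s.exists_next.choose_spec.choose_spec.choose

theorem Stage.next_spec (s : Stage K L) :
    (∀ e, s.next.lab e ≠ ⊥) ∧ (∀ e, s.d (single e 1) ∈ s.cyc (s.next.lab e)) ∧
      (∀ x ≠ ⊥, ∀ u ∈ s.cyc x, ∃ v ∈ supported K K {e | s.next.lab e ≤ x}, s.d v = u) ∧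
      ∀ x, ∀ u ∈ supported K K {e | s.next.lab e = x},
        s.d u ∈ (⨆ y, ⨆ (_ : y ≠ ⊥), ⨆ (_ : y < x), s.cyc y) → u = 0 :=
  s.exists_next.choose_spec.choose_spec.choose_spec

theorem Stage.d_mem (s : Stage K L) (u : s.next.ι →₀ K) : s.d u ∈ s.Z :=
  map_mem_of_mem_supported (s := Set.univ) s.d (fun e _ => (s.next_spec.2.1 e).1)
    (by rw [supported_univ]; trivial)

theorem Stage.lab_lt_of_next_d (s : Stage K L) (e : s.next.next.ι) :
    s.next.d (single e 1) ∈ supported K K {f | s.next.lab f < s.next.next.lab e} := by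
  classical
  obtain ⟨hZ, hle⟩ := s.next.next_spec.2.1 e
  set u := s.next.d (single e 1)
  set x := s.next.next.lab e
  have hu : s.d u = 0 := hZ
  have hlt : u.filter (fun f => ¬ s.next.lab f = x) ∈
      supported K K {f | s.next.lab f < x} := by
    rw [mem_supported]
    intro f hf
    rw [Finset.mem_coe, support_filter, Finset.mem_filter] at hf
    exact lt_of_le_of_ne ((mem_supported _ _).mp hle hf.1) hf.2
  have hsum := filter_add_filter_not u fun f => s.next.lab f = x
  have h0 : u.filter (fun f => s.next.lab f = x) = 0 := by
    refine s.next_spec.2.2.2 x _ ?_ ?_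
    · rw [mem_supported]
      intro f hf
      rw [Finset.mem_coe, support_filter, Finset.mem_filter] at hf
      exact hf.2
    · rw [← hsum, map_add] at hu
      rw [eq_neg_of_add_eq_zero_left hu]
      refine neg_mem (map_mem_of_mem_supported _ (fun f hf => ?_) hlt)
      exact Submodule.mem_iSup_of_mem (s.next.lab f) (Submodule.mem_iSup_of_mem
        (s.next_spec.1 f) (Submodule.mem_iSup_of_mem hf (s.next_spec.2.1 f)))
  rw [h0, zero_add] at hsum
  rwa [← hsum]

/-- The stages of the minimal resolution. -/
def stage (K : Type) [Field K] (L : Type) [PartialOrder L] [OrderBot L] [WellFoundedLT L] :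
    ℕ → Stage K L
  | 0 => ⟨Unit, fun _ => ⊥, ⊤⟩
  | n + 1 => (stage K L n).next

variable (K L) in
/-- Minimal resolutions exist. -/
theorem exists_isMinimal_isResolution :
    ∃ F : LabelledComplex K L, F.IsMinimal ∧ F.IsResolution := by
  let F : LabelledComplex K L :=
    { ι := fun i => (stage K L i).ι
      lab := fun {i} => (stage K L i).lab
      d := fun i => (stage K L i).d
      d_d := fun i u => (stage K L (i + 1)).d_mem u
      lab_d := fun i e => ((stage K L i).next_spec.2.1 e).2 }
  have hcyc : ∀ i, F.cycles i = (stage K L i).Z := fun i => by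
    cases i <;> rfl
  refine ⟨F, fun i e => ?_, ⟨⟨(), fun _ => rfl⟩, fun _ => rfl,
    fun i => (stage K L i).next_spec.1, fun x hx i u hu hc => ?_⟩⟩
  · cases i with
    | zero => exact mem_on_iff.mpr fun f _ => bot_lt_iff_ne_bot.mpr ((stage K L 0).next_spec.1 e)
    | succ i => exact (stage K L i).lab_lt_of_next_d e
  · rw [hcyc] at hc
    exact (stage K L i).next_spec.2.2.1 x hx u ⟨hc, hu⟩

end MinimalResolution


section OrderChains

variable {P : Type} [PartialOrder P]

/-- Adjoining an element `x` on top of a chain of elements `< x`. -/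
def chainCons {n : ℕ} (x : P) (c : OChain P n) (h : ∀ k, c.1 k < x) : OChain P (n + 1) :=
  ⟨Fin.cons x c.1, by
    intro a b hab
    cases b using Fin.cases with
    | zero => exact absurd hab (Fin.not_lt_zero a)
    | succ b =>
      cases a using Fin.cases with
      | zero => simpa using h b
      | succ a => simpa using c.2 (Fin.succ_lt_succ_iff.mp hab)⟩

theorem odel_zero_chainCons {n : ℕ} (x : P) (c : OChain P n) (h : ∀ k, c.1 k < x) :
    odel P 0 (chainCons x c h) = c :=
  Subtype.ext (funext fun k => by simp [odel, chainCons])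

theorem odel_succ_chainCons {n : ℕ} (x : P) (c : OChain P (n + 1)) (h : ∀ k, c.1 k < x)
    (k : Fin (n + 1)) :
    odel P k.succ (chainCons x c h) = chainCons x (odel P k c) fun l => h (k.succAbove l) := by
  refine Subtype.ext (funext fun l => ?_)
  cases l using Fin.cases with
  | zero => simp [odel, chainCons]
  | succ l => simp [odel, chainCons, Fin.removeNth]

theorem exists_eq_chainCons {n : ℕ} (c : OChain P (n + 1)) :
    ∃ c' h, c = chainCons (c.1 0) c' h :=
  ⟨odel P 0 c, fun k => c.2 (by simp), Subtype.ext (funext fun l => by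
    cases l using Fin.cases <;> simp [odel, chainCons])⟩

theorem cbdry_single {n : ℕ} (c : OChain P (n + 1)) :
    cbdry K P n (single c 1) = ∑ k : Fin (n + 1), (-1 : K) ^ (k : ℕ) • single (odel P k c) 1 := by
  simp [cbdry]

open Classical in
variable (K) in
/-- The cone operator, adjoining `x` on top of every chain of elements `< x` and killing the
other chains. -/
def coneMap (n : ℕ) (x : P) : CGrp K P n →ₗ[K] CGrp K P (n + 1) :=
  Finsupp.linearCombination K fun c =>
    if h : ∀ k, c.1 k < x then single (chainCons x c h) 1 else 0

theorem coneMap_single {n : ℕ} {x : P} {c : OChain P n} (h : ∀ k, c.1 k < x) :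
    coneMap K n x (single c 1) = single (chainCons x c h) 1 := by
  simp [coneMap, h]

theorem coneMap_single_of_not {n : ℕ} {x : P} {c : OChain P n} (h : ¬ ∀ k, c.1 k < x) :
    coneMap K n x (single c 1) = 0 := by
  simp [coneMap, h]

theorem coneMap_mem {n : ℕ} (x : P) (u : CGrp K P n) :
    coneMap K n x u ∈ supported K K {c : OChain P (n + 1) | c.1 0 ≤ x} := by
  have hu : u ∈ supported K K (Set.univ : Set (OChain P n)) := by simp
  refine map_mem_of_mem_supported (coneMap K n x) (fun c _ => ?_) hu
  by_cases h : ∀ k, c.1 k < x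
  · rw [coneMap_single h]
    exact single_mem_supported K 1 (le_refl x)
  · rw [coneMap_single_of_not h]
    exact Submodule.zero_mem _

theorem coneMap_coneMap {n : ℕ} (x : P) (u : CGrp K P n) :
    coneMap K (n + 1) x (coneMap K n x u) = 0 := by
  suffices h : coneMap K (n + 1) x ∘ₗ coneMap K n x = 0 from LinearMap.congr_fun h u
  ext c : 2
  rw [LinearMap.comp_apply, LinearMap.comp_apply, lsingle_apply]
  by_cases h : ∀ k, c.1 k < x
  · rw [coneMap_single h, coneMap_single_of_not fun h' => (h' 0).ne (by simp [chainCons])]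
    rfl
  · rw [coneMap_single_of_not h, map_zero]
    rfl

theorem cbdry_coneMap_zero (x : P) (u : CGrp K P 0) :
    cbdry K P 0 (coneMap K 0 x u) = u := by
  suffices h : cbdry K P 0 ∘ₗ coneMap K 0 x = LinearMap.id from LinearMap.congr_fun h u
  ext c : 2
  rw [LinearMap.comp_apply, LinearMap.comp_apply, lsingle_apply,
    coneMap_single fun k => k.elim0, cbdry_single]
  simp [odel_zero_chainCons]

theorem cbdry_single_chainCons {n : ℕ} (x : P) (c : OChain P (n + 1)) (h : ∀ k, c.1 k < x) :
    cbdry K P (n + 1) (single (chainCons x c h) 1) =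
      single c 1 - coneMap K n x (cbdry K P n (single c 1)) := by
  rw [cbdry_single, Fin.sum_univ_succ, odel_zero_chainCons, cbdry_single, map_sum,
    sub_eq_add_neg, ← Finset.sum_neg_distrib]
  congr 1
  · simp
  · refine Finset.sum_congr rfl fun k _ => ?_
    rw [odel_succ_chainCons, map_smul, coneMap_single fun l => h (k.succAbove l),
      Fin.val_succ, pow_succ, mul_neg_one, neg_smul]

theorem cbdry_coneMap_succ {n : ℕ} (x : P) {u : CGrp K P (n + 1)}
    (hu : u ∈ supported K K {c : OChain P (n + 1) | c.1 0 ≤ x}) :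
    cbdry K P (n + 1) (coneMap K (n + 1) x u) = u - coneMap K n x (cbdry K P n u) := by
  suffices h : (cbdry K P (n + 1) ∘ₗ coneMap K (n + 1) x - LinearMap.id +
      coneMap K n x ∘ₗ cbdry K P n : CGrp K P (n + 1) →ₗ[K] CGrp K P (n + 1)) u ∈
        (⊥ : Submodule K (CGrp K P (n + 1))) by
    rw [Submodule.mem_bot] at h
    simp only [LinearMap.add_apply, LinearMap.sub_apply, LinearMap.comp_apply,
      LinearMap.id_apply] at h
    rw [← sub_eq_zero, ← h]
    abel
  refine map_mem_of_mem_supported _ (fun c hc => ?_) hu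
  rw [Submodule.mem_bot, LinearMap.add_apply, LinearMap.sub_apply, LinearMap.comp_apply,
    LinearMap.comp_apply, LinearMap.id_apply]
  rcases (show c.1 0 ≤ x from hc).lt_or_eq with hlt | rfl
  · have h : ∀ k, c.1 k < x := fun k => (c.2.antitone (Fin.zero_le k)).trans_lt hlt
    rw [coneMap_single h, cbdry_single_chainCons]
    abel
  · obtain ⟨c', h, hcc⟩ := exists_eq_chainCons c
    generalize c.1 0 = x at *
    subst hcc
    rw [← coneMap_single h, coneMap_coneMap, map_zero]
    cases n with
    | zero => rw [cbdry_coneMap_zero]; abel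
    | succ n =>
      rw [coneMap_single h, cbdry_single_chainCons, map_sub, coneMap_coneMap, coneMap_single h]
      abel

theorem cbdry_single_mem {n : ℕ} (c : OChain P (n + 2)) :
    cbdry K P (n + 1) (single c 1) ∈
      supported K K {c' : OChain P (n + 1) | c'.1 0 ≤ c.1 0} := by
  rw [cbdry_single]
  exact Submodule.sum_mem _ fun k _ => Submodule.smul_mem _ _
    (single_mem_supported K 1 (c.2.antitone (Fin.zero_le _)))

theorem cbdry_cbdry {n : ℕ} (u : CGrp K P (n + 2)) :
    cbdry K P n (cbdry K P (n + 1) u) = 0 := by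
  suffices h : cbdry K P n ∘ₗ cbdry K P (n + 1) = 0 from LinearMap.congr_fun h u
  induction n with
  | zero =>
    ext c : 2
    obtain ⟨c', h, hcc⟩ := exists_eq_chainCons c
    rw [LinearMap.comp_apply, LinearMap.comp_apply, lsingle_apply, hcc, cbdry_single_chainCons,
      map_sub, cbdry_coneMap_zero, sub_self]
    rfl
  | succ n ih =>
    ext c : 2
    obtain ⟨c', h, hcc⟩ := exists_eq_chainCons c
    have hle : {f : OChain P (n + 1) | f.1 0 ≤ c'.1 0} ⊆ {f | f.1 0 ≤ c.1 0} :=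
      fun f hf => le_trans hf (h 0).le
    rw [LinearMap.comp_apply, LinearMap.comp_apply, lsingle_apply, hcc, cbdry_single_chainCons,
      map_sub, cbdry_coneMap_succ _ (supported_mono hle (cbdry_single_mem c'))]
    have := LinearMap.congr_fun (ih 0) (single c' 1)
    rw [LinearMap.comp_apply, LinearMap.zero_apply] at this
    rw [this, map_zero, sub_zero, sub_self]
    rfl

theorem boundariesIn_le_cyclesAt (n : ℕ) : boundariesIn K P n ≤ cyclesAt K P n := by
  cases n with
  | zero => exact le_top
  | succ n =>
    rintro _ ⟨u, rfl⟩
    exact cbdry_cbdry u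

/-- The image of a chain under an order embedding. -/
def chainMap {Q : Type} [PartialOrder Q] (φ : Q ↪o P) {n : ℕ} (c : OChain Q n) : OChain P n :=
  ⟨φ ∘ c.1, φ.strictMono.comp_strictAnti c.2⟩

theorem chainMap_injective {Q : Type} [PartialOrder Q] (φ : Q ↪o P) (n : ℕ) :
    Function.Injective (chainMap φ (n := n)) := fun _ _ h =>
  Subtype.ext (φ.injective.comp_left (congrArg Subtype.val h))

theorem cbdry_lmapDomain {Q : Type} [PartialOrder Q] (φ : Q ↪o P) {n : ℕ}
    (u : CGrp K Q (n + 1)) :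
    cbdry K P n (lmapDomain K K (chainMap φ) u) = lmapDomain K K (chainMap φ) (cbdry K Q n u) := by
  suffices h : cbdry K P n ∘ₗ lmapDomain K K (chainMap φ) =
      lmapDomain K K (chainMap φ) ∘ₗ cbdry K Q n from LinearMap.congr_fun h u
  ext c : 2
  simp only [LinearMap.comp_apply, lsingle_apply, cbdry_single, map_sum, map_smul,
    lmapDomain_apply, mapDomain_single]
  rfl

end OrderChains

section BarComplex

variable [PartialOrder L] [OrderBot L]

variable (K L) in
/-- The complex of order chains of nonbottom elements of `L`, each labelled by its largest
element. -/
def bar : LabelledComplex K L where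
  ι := OChain {y : L // y ≠ ⊥}
  lab {i} := match i with
    | 0 => fun _ => ⊥
    | _ + 1 => fun c => c.1 0
  d := cbdry K {y : L // y ≠ ⊥}
  d_d _ := cbdry_cbdry
  lab_d i e := match i with
    | 0 => by
      refine (mem_supported _ _).mpr fun f _ => ?_
      exact bot_le
    | _ + 1 => cbdry_single_mem e

theorem mem_bar_on_iff {i : ℕ} {x : L} {hx : x ≠ ⊥} {u : CGrp K {y : L // y ≠ ⊥} (i + 1)} :
    u ∈ (bar K L).on (i + 1) (Set.Iic x) ↔
      u ∈ supported K K {c : OChain {y : L // y ≠ ⊥} (i + 1) | c.1 0 ≤ ⟨x, hx⟩} := by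
  refine (mem_on_iff (F := bar K L)).trans (Iff.trans ?_ (mem_supported' K u).symm)
  exact forall_congr' fun e => by rw [not_imp_comm]; rfl

theorem bar_isResolution : (bar K L).IsResolution where
  existsUnique_zero := ⟨⟨Fin.elim0, fun a => a.elim0⟩, fun e => Subtype.ext (Subsingleton.elim _ _)⟩
  lab_zero _ := rfl
  lab_succ _ e := (e.1 0).2
  exact x hx i u hu hc := by
    refine ⟨coneMap K i ⟨x, hx⟩ u, ?_, ?_⟩
    · exact mem_bar_on_iff.mpr (coneMap_mem _ u)
    · cases i with
      | zero => exact cbdry_coneMap_zero _ u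
      | succ i =>
        have hcu : cbdry K {y : L // y ≠ ⊥} i u = 0 := hc
        refine (cbdry_coneMap_succ _ ((mem_bar_on_iff (hx := hx)).mp hu)).trans ?_
        rw [hcu, map_zero]
        exact sub_zero _

/-- The homology of the bar complex below `x` is the reduced homology of the order complex of
the open interval from `⊥` to `x`. -/
theorem homologyBelow_bar_iff {Q : Type} [PartialOrder Q] (φ : Q ↪o {y : L // y ≠ ⊥}) {x : L}
    (hx : x ≠ ⊥) (hφ : ∀ y, y ∈ Set.range φ ↔ y.1 < x) {i : ℕ} :
    (bar K L).HomologyBelow i x ↔ RHomNontrivial K Q i := by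
  let T (n : ℕ) : CGrp K Q n →ₗ[K] CGrp K {y : L // y ≠ ⊥} n := lmapDomain K K (chainMap φ)
  have hT (n) : Function.Injective (T n) := mapDomain_injective (chainMap_injective φ n)
  have hTd (n) (u : CGrp K Q (n + 1)) : cbdry K _ n (T (n + 1) u) = T n (cbdry K Q n u) :=
    cbdry_lmapDomain φ u
  have hlab : ∀ n (c : OChain {y : L // y ≠ ⊥} n),
      (bar K L).lab (i := n) c < x ↔ c ∈ Set.range (chainMap φ) := by
    intro n c
    cases n with
    | zero =>
      exact iff_of_true (bot_lt_iff_ne_bot.mpr hx)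
        ⟨⟨Fin.elim0, fun a => a.elim0⟩, Subtype.ext (Subsingleton.elim _ _)⟩
    | succ n =>
      constructor
      · intro h
        have hc : ∀ k, ∃ q, φ q = c.1 k := fun k =>
          (hφ _).mpr (lt_of_le_of_lt (c.2.antitone (Fin.zero_le k)) h)
        choose q hq using hc
        exact ⟨⟨q, fun a b hab => φ.lt_iff_lt.mp (by rw [hq, hq]; exact c.2 hab)⟩,
          Subtype.ext (funext hq)⟩
      · rintro ⟨c, rfl⟩
        exact (hφ _).mp ⟨c.1 0, rfl⟩
  have hon (n) (u : CGrp K {y : L // y ≠ ⊥} n) :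
      u ∈ (bar K L).on n (Set.Iio x) ↔ ∃ v, T n v = u := by
    have h : supported K K {c : OChain {y : L // y ≠ ⊥} n | (bar K L).lab (i := n) c < x} =
        LinearMap.range (T n) := by
      rw [show {c : OChain {y : L // y ≠ ⊥} n | (bar K L).lab (i := n) c < x} = _ from
        Set.ext (hlab n), ← Set.image_univ, ← lmapDomain_supported,
        supported_univ, Submodule.map_top]
    exact SetLike.ext_iff.mp h u
  have hcyc (n) (u : CGrp K Q n) : T n u ∈ (bar K L).cycles n ↔ u ∈ cyclesAt K Q n := by
    cases n with
    | zero => exact iff_of_true trivial trivial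
    | succ n =>
      change cbdry K _ n (T (n + 1) u) = 0 ↔ cbdry K Q n u = 0
      rw [hTd, map_eq_zero_iff _ (hT n)]
  constructor
  · rintro ⟨z, hz, hzc, hzb⟩ hle
    obtain ⟨w, rfl⟩ := (hon i z).mp hz
    obtain ⟨v, rfl⟩ := hle ((hcyc i w).mp hzc)
    exact hzb (T (i + 1) v) ((hon (i + 1) _).mpr ⟨v, rfl⟩) (hTd i v)
  · intro h
    obtain ⟨w, hw, hwb⟩ := SetLike.not_le_iff_exists.mp h
    refine ⟨T i w, (hon i _).mpr ⟨w, rfl⟩, (hcyc i w).mpr hw, fun v hv hvz => hwb ?_⟩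
    obtain ⟨v, rfl⟩ := (hon (i + 1) v).mp hv
    exact ⟨v, hT i ((hTd i v).symm.trans hvz)⟩

end BarComplex

/-- If the open interval below `⊤` has homology in degree `j`, then `⊤` is the join of two
elements with homology in prescribed degrees `a` and `b`. -/
theorem exists_sup_eq_top_of_homologyBelow_bar [SemilatticeSup L] [BoundedOrder L] [Nontrivial L]
    [WellFoundedLT L] {a b j : ℕ} (haj : a ≤ j) (hbj : b ≤ j) (hjab : j ≤ a + b + 1)
    (h : (bar K L).HomologyBelow j ⊤) :
    ∃ y z : L, y ≠ ⊥ ∧ z ≠ ⊥ ∧ y ⊔ z = ⊤ ∧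
      (bar K L).HomologyBelow a y ∧ (bar K L).HomologyBelow b z := by
  obtain ⟨F, hm, hF⟩ := exists_isMinimal_isResolution K L
  obtain ⟨e₀, he₀⟩ := (hm.exists_lab_eq_iff hF top_ne_bot).mpr
    (h.of_isResolution bar_isResolution hF)
  obtain ⟨e, g, heg⟩ := hm.exists_sup_eq_top hF (a := a + 1) (b := b + 1) (by omega) (by omega)
    (by omega) (by omega) he₀
  have he := hF.lab_succ _ e
  have hg := hF.lab_succ _ g
  exact ⟨_, _, he, hg, heg,
    ((hm.exists_lab_eq_iff hF he).mp ⟨e, rfl⟩).of_isResolution hF bar_isResolution,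
    ((hm.exists_lab_eq_iff hF hg).mp ⟨g, rfl⟩).of_isResolution hF bar_isResolution⟩

end LabelledComplex

end LabelledComplexes

section LcmLattice

variable {K : Type} [Field K] {nv : ℕ} {I : Ideal (PolyS K nv)}

theorem finite_openInt (m : Fin nv → ℕ) : Finite (openInt K nv I m) :=
  ((Set.finite_Iic m).subset fun _ hp => hp.2.2.le).to_subtype

theorem finite_oChain (P : Type) [Preorder P] [Finite P] (n : ℕ) : Finite (OChain P n) :=
  Subtype.finite

theorem multiBetti_succ_ne_zero_iff {i : ℕ} {m : Fin nv → ℕ} :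
    multiBetti K nv I (i + 1) m ≠ 0 ↔
      (m ∈ lcmSet K nv I ∧ m ≠ 0) ∧ RHomNontrivial K (openInt K nv I m) i := by
  have := finite_openInt (K := K) (I := I) m
  have := finite_oChain (openInt K nv I m) i
  rw [multiBetti, if_neg i.succ_ne_zero, add_tsub_cancel_right]
  split_ifs with h
  · rw [and_iff_right h, Nat.sub_ne_zero_iff_lt, RHomNontrivial, ← not_le, not_iff_not]
    have hle := LabelledComplex.boundariesIn_le_cyclesAt (K := K) (P := openInt K nv I m) i
    exact ⟨fun hr => (Submodule.eq_of_le_of_finrank_le hle hr).ge, Submodule.finrank_mono⟩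
  · simp [h]

theorem zero_mem_lcmSet : (0 : Fin nv → ℕ) ∈ lcmSet K nv I :=
  ⟨∅, by simp, by simp; rfl⟩

theorem sup_mem_lcmSet {x y : Fin nv → ℕ} (hx : x ∈ lcmSet K nv I) (hy : y ∈ lcmSet K nv I) :
    x ⊔ y ∈ lcmSet K nv I := by
  classical
  obtain ⟨B, hB, rfl⟩ := hx
  obtain ⟨C, hC, rfl⟩ := hy
  exact ⟨B ∪ C, by rw [Finset.coe_union]; exact Set.union_subset hB hC, Finset.sup_union.symm⟩

theorem bddAbove_lcmSet : BddAbove (lcmSet K nv I) := by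
  have hanti : IsAntichain (· ≤ ·) (minGens K nv I) := fun x hx y hy hne hle =>
    hy.2 x (lt_of_le_of_ne hle hne) hx.1
  have hfin : (minGens K nv I).Finite :=
    hanti.finite_of_partiallyWellOrderedOn (Set.isPWO_of_wellQuasiOrderedLE _)
  refine ⟨hfin.toFinset.sup id, ?_⟩
  rintro _ ⟨B, hB, rfl⟩
  exact Finset.sup_mono fun b hb => hfin.mem_toFinset.mpr (hB hb)

theorem degTot_le_tshift {i : ℕ} {x : Fin nv → ℕ}
    (h : multiBetti K nv I (i + 1) x ≠ 0) : degTot nv x ≤ tshift K nv I (i + 1) := by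
  have hmono : ∀ {y z : Fin nv → ℕ}, y ≤ z → degTot nv y ≤ degTot nv z :=
    fun hyz => Finset.sum_le_sum fun r _ => hyz r
  refine le_csSup ?_ ?_
  · obtain ⟨M, hM⟩ := bddAbove_lcmSet (K := K) (I := I)
    refine ⟨degTot nv M, fun j hj => ?_⟩
    obtain ⟨y, hyj, hy⟩ := exists_ne_zero_of_finsum_mem_ne_zero hj
    exact (show degTot nv y = j from hyj) ▸ hmono (hM (multiBetti_succ_ne_zero_iff.mp hy).1.1)
  · have hfin : {y : Fin nv → ℕ | degTot nv y = degTot nv x}.Finite := by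
      refine (Set.finite_Iic fun _ => degTot nv x).subset fun y hy r => ?_
      exact (Finset.single_le_sum (fun _ _ => Nat.zero_le _) (Finset.mem_univ r)).trans_eq hy
    change betti K nv I (i + 1) (degTot nv x) ≠ 0
    rw [betti, finsum_mem_eq_finite_toFinset_sum _ hfin]
    exact fun h0 => h (Finset.sum_eq_zero_iff.mp h0 x (hfin.mem_toFinset.mpr rfl))

variable (K nv I) in
/-- The part of the lcm-lattice of `I` below `m`. -/
abbrev LcmBelow (m : Fin nv → ℕ) : Type := {x : Fin nv → ℕ // x ∈ lcmSet K nv I ∧ x ≤ m}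

instance (m : Fin nv → ℕ) : SemilatticeSup (LcmBelow K nv I m) :=
  Subtype.semilatticeSup fun _ _ hx hy => ⟨sup_mem_lcmSet hx.1 hy.1, sup_le hx.2 hy.2⟩

instance (m : Fin nv → ℕ) : OrderBot (LcmBelow K nv I m) where
  bot := ⟨0, zero_mem_lcmSet, fun _ => Nat.zero_le _⟩
  bot_le _ _ := Nat.zero_le _

instance (m : Fin nv → ℕ) : WellFoundedLT (LcmBelow K nv I m) :=
  have : Finite (LcmBelow K nv I m) := ((Set.finite_Iic m).subset fun _ hp => hp.2).to_subtype
  inferInstance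

theorem homologyBelow_bar_iff_rHomNontrivial {i : ℕ} {m : Fin nv → ℕ} {x : LcmBelow K nv I m}
    (hx : x ≠ ⊥) : (LabelledComplex.bar K (LcmBelow K nv I m)).HomologyBelow i x ↔
      RHomNontrivial K (openInt K nv I x.1) i := by
  let φ : openInt K nv I x.1 ↪o {y : LcmBelow K nv I m // y ≠ ⊥} :=
    OrderEmbedding.ofMapLEIff
      (fun p => ⟨⟨p.1, p.2.1, p.2.2.2.le.trans x.2.2⟩,
        fun h => p.2.2.1.ne' (congrArg Subtype.val h)⟩)
      fun _ _ => Iff.rfl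
  refine LabelledComplex.homologyBelow_bar_iff φ hx fun y => ⟨?_, fun hy => ?_⟩
  · rintro ⟨p, rfl⟩
    exact p.2.2.2
  · exact ⟨⟨y.1.1, y.1.2.1, bot_lt_iff_ne_bot.mpr fun h => y.2 (Subtype.ext h), hy⟩, rfl⟩

end LcmLattice

/-- Let `I` be a monomial ideal in `S = K[x₁, …, xₙ]`, let
`i₁, i₂ ≥ 1` and `0 ≤ k ≤ min{i₁, i₂}`.  For any monomial `m` with
`β_{i₁+i₂-k, m}(S/I) ≠ 0` there are monomials `n₁, n₂` dividing `m` such that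
`m = lcm(n₁, n₂)` (the pointwise supremum of exponent vectors),
`β_{i₁,n₁}(S/I) ≠ 0`, `β_{i₂,n₂}(S/I) ≠ 0`; in particular `deg n₁ ≤ t_{i₁}(S/I)` and
`deg n₂ ≤ t_{i₂}(S/I)`. -/
theorem multigraded_betti_lcm_decomposition (nv : ℕ) (I : Ideal (PolyS K nv))
    (hI : IsMonomialIdeal K nv I) (i₁ i₂ k : ℕ) (hi₁ : 1 ≤ i₁) (hi₂ : 1 ≤ i₂)
    (hk : k ≤ min i₁ i₂) (m : Fin nv → ℕ)
    (hm : multiBetti K nv I (i₁ + i₂ - k) m ≠ 0) :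
    ∃ n₁ n₂ : Fin nv → ℕ,
      n₁ ≤ m ∧ n₂ ≤ m ∧ m = n₁ ⊔ n₂ ∧
      multiBetti K nv I i₁ n₁ ≠ 0 ∧ multiBetti K nv I i₂ n₂ ≠ 0 ∧
      degTot nv n₁ ≤ tshift K nv I i₁ ∧ degTot nv n₂ ≤ tshift K nv I i₂ := by
  obtain ⟨a, rfl⟩ := Nat.exists_eq_add_of_le' hi₁
  obtain ⟨b, rfl⟩ := Nat.exists_eq_add_of_le' hi₂
  have hk₁ := hk.trans (min_le_left _ _)
  have hk₂ := hk.trans (min_le_right _ _)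
  obtain ⟨j, hj⟩ : ∃ j, a + 1 + (b + 1) - k = j + 1 := ⟨a + 1 + (b + 1) - k - 1, by omega⟩
  rw [hj, multiBetti_succ_ne_zero_iff] at hm
  obtain ⟨⟨hmem, hm0⟩, hm⟩ := hm
  let : OrderTop (LcmBelow K nv I m) := { top := ⟨m, hmem, le_rfl⟩, le_top := fun x => x.2.2 }
  let : BoundedOrder (LcmBelow K nv I m) := {}
  have htop : (⊤ : LcmBelow K nv I m) ≠ ⊥ := fun h => hm0 (congrArg Subtype.val h)
  have : Nontrivial (LcmBelow K nv I m) := ⟨_, _, htop⟩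
  obtain ⟨y, z, hy, hz, hyz, hy', hz'⟩ :=
    LabelledComplex.exists_sup_eq_top_of_homologyBelow_bar (a := a) (b := b) (j := j)
      (by omega) (by omega) (by omega) ((homologyBelow_bar_iff_rHomNontrivial htop).mpr hm)
  have hne : ∀ {x : LcmBelow K nv I m}, x ≠ ⊥ → x.1 ≠ 0 := fun hx h => hx (Subtype.ext h)
  have hβy : multiBetti K nv I (a + 1) y.1 ≠ 0 := multiBetti_succ_ne_zero_iff.mpr
    ⟨⟨y.2.1, hne hy⟩, (homologyBelow_bar_iff_rHomNontrivial hy).mp hy'⟩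
  have hβz : multiBetti K nv I (b + 1) z.1 ≠ 0 := multiBetti_succ_ne_zero_iff.mpr
    ⟨⟨z.2.1, hne hz⟩, (homologyBelow_bar_iff_rHomNontrivial hz).mp hz'⟩
  exact ⟨y.1, z.1, y.2.2, z.2.2, (congrArg Subtype.val hyz).symm, hβy, hβz,
    degTot_le_tshift hβy, degTot_le_tshift hβz⟩

end
end
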